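/- arXiv:math/0502331 — 2 statements merged into one kernel-verified Lean document; each statement's English description precedes it below -/
import Mathlib

section
/- Let I,J,M,N ⊆ {1,…,n} with |I| = |J|, |M| = |N|, I∩M = J∩N, and I∪M = J∪N. Then r([I|J],[M|N]) = q^{|I∩M|} (−q)^{ℓ(I; J∩N) − ℓ(J; I∩M)} r([I∖M | J∖N],[M|N]). -/
/-!
A quantum minor is a coefficient in a product in `Λ ⊗ A`, where `Λ` is the quantum exterior algebra
on `e_1, …, e_n`: with `Y_j = ∑ i, e_i ⊗ X_{ij}`, the coefficient of `e_I` in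
`Y_{j₁} ⋯ Y_{j_t}` (`j₁ < ⋯ < j_t`) is `[I|J]` (`qMinor_eq`). The `Y_j` satisfy `Y_s² = 0` and
`Y_b Y_s = -q Y_s Y_b` for `s < b` (`Y_sq`, `Y_comm`), so any column `s ∈ J` can be moved to the far
right. This gives the Laplace expansion (`Z_split`)
`(-q)^{#{b ∈ J, b > s}} [I|J] = ∑_{i ∈ I} (-q)^{#{x ∈ I, x > i}} [I∖i|J∖s] X_{is}`.

Pairing with `c = [M|N]` through `r(ab,c) = Σ r(a,c₁) r(b,c₂)`, the factor `X_{is}` acts on `c` by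
`T i s : c ↦ Σ c₁ r(X_{is},c₂)`. The values of `r` on generators give commutation rules of the `T`'s
with the `Y`'s (`T_Y`), and these imply `T i s [M|N] = δ_{is} q [M|N]` whenever `s ∈ N` (`T_YL`).
Hence only `i = s` survives, and for `s ∈ I ∩ J ∩ N` (`one_step`)
`r([I|J],[M|N]) = q (-q)^{ℓ(I;s) - ℓ(J;s)} r([I∖s|J∖s],[M|N])`.
Removing the elements of `I ∩ M = J ∩ N` one at a time (`many_steps`) proves the theorem.
-/

open scoped TensorProduct
open scoped Classical

noncomputable section

namespace QMat

variable (k : Type*) [Field k] (n : ℕ) (q : k)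

/-- Defining relations of the quantized coordinate ring `O_q(M_n(k))`. -/
inductive Rel : FreeAlgebra k (Fin n × Fin n) → FreeAlgebra k (Fin n × Fin n) → Prop
  | col {i l j : Fin n} (h : i < l) :
      Rel (FreeAlgebra.ι k (i, j) * FreeAlgebra.ι k (l, j))
        (q • (FreeAlgebra.ι k (l, j) * FreeAlgebra.ι k (i, j)))
  | row {i j m : Fin n} (h : j < m) :
      Rel (FreeAlgebra.ι k (i, j) * FreeAlgebra.ι k (i, m))
        (q • (FreeAlgebra.ι k (i, m) * FreeAlgebra.ι k (i, j)))
  | swap {i j l m : Fin n} (h1 : i < l) (h2 : m < j) :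
      Rel (FreeAlgebra.ι k (i, j) * FreeAlgebra.ι k (l, m))
        (FreeAlgebra.ι k (l, m) * FreeAlgebra.ι k (i, j))
  | mixed {i j l m : Fin n} (h1 : i < l) (h2 : j < m) :
      Rel (FreeAlgebra.ι k (i, j) * FreeAlgebra.ι k (l, m))
        (FreeAlgebra.ι k (l, m) * FreeAlgebra.ι k (i, j)
          + (q - q⁻¹) • (FreeAlgebra.ι k (i, m) * FreeAlgebra.ι k (l, j)))

/-- The quantized coordinate ring `A = O_q(M_n(k))`. -/
abbrev A : Type _ := RingQuot (Rel k n q)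

/-- The generator `X_{ij}` of `O_q(M_n(k))`. -/
def X (i j : Fin n) : A k n q :=
  RingQuot.mkAlgHom k (Rel k n q) (FreeAlgebra.ι k (i, j))

/-- The number of inversions `ℓ(σ)` of a permutation of `Fin t`. -/
def inversions {t : ℕ} (σ : Equiv.Perm (Fin t)) : ℕ :=
  (Finset.univ.filter fun p : Fin t × Fin t => p.1 < p.2 ∧ σ p.2 < σ p.1).card

/-- The quantum minor `[I|J]` (with junk value `0` when `|I| ≠ |J|`). -/
def qMinor (I J : Finset (Fin n)) : A k n q :=
  if h : I.card = J.card then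
    ∑ σ : Equiv.Perm (Fin I.card),
      ((-q) ^ inversions σ) •
        (List.ofFn fun l : Fin I.card =>
          X k n q (↑((I.orderIsoOfFin rfl) (σ l))) (↑((J.orderIsoOfFin h.symm) l))).prod
  else 0

/-- `ℓ(S;T) = #{(s,t) ∈ S×T : s > t}`. -/
def ell (S T : Finset (Fin n)) : ℕ :=
  ((S ×ˢ T).filter fun p => p.2 < p.1).card

/-- The `(-q)`-integer `[d]_{-q} = (-q)^{d-1} + (-q)^{d-3} + ⋯ + (-q)^{-(d-1)}`. -/
def negqInt (d : ℕ) : k :=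
  ∑ s ∈ Finset.range d, (-q) ^ ((d : ℤ) - 1 - 2 * (s : ℤ))

/-- `ξ_q(I;J) = [d₁]_{-q}⋯[d_m]_{-q}` where `d_l = |[1,r_l] ∩ J| - l + 1` for
`I = {r₁ < ⋯ < r_m}` (with junk value `1` when `|I| ≠ |J|`). -/
def xiq (I J : Finset (Fin n)) : k :=
  if _h : I.card = J.card then
    ∏ l : Fin I.card,
      negqInt k q
        ((J.filter fun x => x ≤ (↑((I.orderIsoOfFin rfl) l) : Fin n)).card - (l : ℕ))
  else 1

/-- The componentwise order `I ≤ J` on index sets of the same cardinality: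
writing `I = {i₁ < ⋯ < i_t}` and `J = {j₁ < ⋯ < j_t}`, we require `i_l ≤ j_l` for all `l`. -/
def setLE (I J : Finset (Fin n)) : Prop :=
  I.card = J.card ∧
    ∀ (h : I.card = J.card) (l : Fin I.card),
      (↑((I.orderIsoOfFin rfl) l) : Fin n) ≤ (↑((J.orderIsoOfFin h.symm) l) : Fin n)

/-- `S^♮ = (X ∩ Y) ⊔ ((X ∪ Y) ∖ S)` relative to the pair `(X, Y)`. -/
def snat (X Y S : Finset (Fin n)) : Finset (Fin n) :=
  (X ∩ Y) ∪ ((X ∪ Y) \ S)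

/-- `S_≤(X,Y) = {S ⊆ X ∪ Y : X ∩ Y ⊆ S, |S| = |X|, S ≤ X}`. -/
def sLE (X Y : Finset (Fin n)) : Finset (Finset (Fin n)) :=
  (X ∪ Y).powerset.filter fun S => X ∩ Y ⊆ S ∧ S.card = X.card ∧ setLE n S X

/-- `S_<(X,Y) = {S ⊆ X ∪ Y : X ∩ Y ⊆ S, |S| = |X|, S < X}`. -/
def sLT (X Y : Finset (Fin n)) : Finset (Finset (Fin n)) :=
  (sLE n X Y).filter fun S => S ≠ X

/-- `S_≥(X,Y) = {T ⊆ X ∪ Y : X ∩ Y ⊆ T, |T| = |X|, T ≥ X}`. -/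
def sGE (X Y : Finset (Fin n)) : Finset (Finset (Fin n)) :=
  (X ∪ Y).powerset.filter fun T => X ∩ Y ⊆ T ∧ T.card = X.card ∧ setLE n X T

/-- `S_>(X,Y) = {T ⊆ X ∪ Y : X ∩ Y ⊆ T, |T| = |X|, T > X}`. -/
def sGT (X Y : Finset (Fin n)) : Finset (Finset (Fin n)) :=
  (sGE n X Y).filter fun T => T ≠ X

/-- `L(S,X,Y) = ℓ((S∖S^♮)∪(Y∖X); X∖S) − ℓ((S∖S^♮)∪(Y∖X); S∖X)`. -/
def Lfun (S X Y : Finset (Fin n)) : ℤ :=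
  (ell n ((S \ snat n X Y S) ∪ (Y \ X)) (X \ S) : ℤ)
    - (ell n ((S \ snat n X Y S) ∪ (Y \ X)) (S \ X) : ℤ)

/-- `L^♮(T,X,Y) = ℓ((T^♮∖T)∪(X∖Y); T∖X) − ℓ((T^♮∖T)∪(X∖Y); X∖T)`. -/
def Lnat (T X Y : Finset (Fin n)) : ℤ :=
  (ell n ((snat n X Y T \ T) ∪ (X \ Y)) (T \ X) : ℤ)
    - (ell n ((snat n X Y T \ T) ∪ (X \ Y)) (X \ T) : ℤ)

/-- The form `A ⊗ A → k` given on pure tensors by `x ⊗ y ↦ f(x) g(y)`. -/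
def biform (f g : A k n q →ₗ[k] k) : (A k n q ⊗[k] A k n q) →ₗ[k] k :=
  (TensorProduct.lid k k).toLinearMap ∘ₗ TensorProduct.map f g

/-- Opposite multiplication `A ⊗ A → A`, `x ⊗ y ↦ y * x`. -/
def mulRev : (A k n q ⊗[k] A k n q) →ₗ[k] A k n q :=
  (LinearMap.mul' k (A k n q)) ∘ₗ (TensorProduct.comm k (A k n q) (A k n q)).toLinearMap

/-- `Σ (a₁ ⊗ b₁) ⊗ (a₂ ⊗ b₂)`, the regrouped double Sweedler decomposition of `a` and `b`. -/
def sweedler2 (Δ : A k n q →ₐ[k] A k n q ⊗[k] A k n q) (a b : A k n q) :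
    (A k n q ⊗[k] A k n q) ⊗[k] (A k n q ⊗[k] A k n q) :=
  (TensorProduct.tensorTensorTensorComm k (A k n q) (A k n q) (A k n q) (A k n q))
    (Δ a ⊗ₜ[k] Δ b)

/-- `Δ` is the standard comultiplication: `Δ(X_{ij}) = Σ_l X_{il} ⊗ X_{lj}`. -/
def IsComul (Δ : A k n q →ₐ[k] A k n q ⊗[k] A k n q) : Prop :=
  ∀ i j : Fin n, Δ (X k n q i j) = ∑ l : Fin n, X k n q i l ⊗ₜ[k] X k n q l j

/-- `ε` is the standard counit: `ε(X_{ij}) = δ_{ij}`. -/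
def IsCounit (ε : A k n q →ₐ[k] k) : Prop :=
  ∀ i j : Fin n, ε (X k n q i j) = if i = j then 1 else 0

/-- The bilinear form `r` satisfies the coquasitriangularity conditions (1.7)(i)-(iv)
together with the prescribed values (1.9) on the generators. -/
def IsRForm (Δ : A k n q →ₐ[k] A k n q ⊗[k] A k n q) (ε : A k n q →ₐ[k] k)
    (r : A k n q →ₗ[k] A k n q →ₗ[k] k) : Prop :=
  -- (i) `Σ r(a₁,b₁) a₂ b₂ = Σ r(a₂,b₂) b₁ a₁`
  (∀ a b : A k n q,
      (TensorProduct.lid k (A k n q))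
          ((TensorProduct.map (TensorProduct.lift r) (LinearMap.mul' k (A k n q)))
            (sweedler2 k n q Δ a b)) =
        (TensorProduct.rid k (A k n q))
          ((TensorProduct.map (mulRev k n q) (TensorProduct.lift r))
            (sweedler2 k n q Δ a b))) ∧
  -- (ii) `r(ab, c) = Σ r(a,c₁) r(b,c₂)`
  (∀ a b c : A k n q, r (a * b) c = biform k n q (r a) (r b) (Δ c)) ∧
  -- (iii) `r(a, bc) = Σ r(a₁,c) r(a₂,b)`
  (∀ a b c : A k n q, r a (b * c) = biform k n q (r.flip c) (r.flip b) (Δ a)) ∧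
  -- (iv) `r(a,1) = r(1,a) = ε(a)`
  (∀ a : A k n q, r a 1 = ε a ∧ r 1 a = ε a) ∧
  -- values on generators
  (∀ i j l m : Fin n,
      r (X k n q i j) (X k n q l m) =
        if i = j ∧ l = m ∧ i = l then q
        else if i = j ∧ l = m then 1
        else if l = j ∧ m = i ∧ j < i then q - q⁻¹
        else 0)

/-- `Σ f(a₁,b₁) g(a₂,b₂)`, the convolution-type pairing of two bilinear forms. -/
def convPair (Δ : A k n q →ₐ[k] A k n q ⊗[k] A k n q)
    (f g : A k n q →ₗ[k] A k n q →ₗ[k] k) (a b : A k n q) : k :=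
  (TensorProduct.lid k k)
    ((TensorProduct.map (TensorProduct.lift f) (TensorProduct.lift g))
      (sweedler2 k n q Δ a b))

/-! ### Quantum minors as products in `Λ ⊗ A` -/

/-- The number of elements of `I` strictly below `i`. -/
def below (I : Finset (Fin n)) (i : Fin n) : ℕ := (I.filter fun x => x < i).card

/-- The number of elements of `I` strictly above `i`. -/
def above (I : Finset (Fin n)) (i : Fin n) : ℕ := (I.filter fun x => i < x).card

/-- Left multiplication by `∑ i, e_i ⊗ X_{ij}` on `Λ ⊗ A`, where `Λ` is the quantum exterior algebra
with basis `e_I` and product `e_I e_J = (-q)^{ℓ(I;J)} e_{I ∪ J}` for `I`, `J` disjoint (and `0`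
otherwise). An element `∑ I, e_I ⊗ f I` of `Λ ⊗ A` is encoded as the function `f`, so that no
algebra structure on `Λ` has to be constructed. -/
def Y (j : Fin n) : (Finset (Fin n) → A k n q) →ₗ[k] (Finset (Fin n) → A k n q) :=
  LinearMap.pi fun I => ∑ i ∈ I, ((-q) ^ below n I i) •
    ((LinearMap.mulLeft k (X k n q i j)) ∘ₗ LinearMap.proj (I.erase i))

/-- Right multiplication by `∑ i, e_i ⊗ X_{ij}` on `Λ ⊗ A`, in the same encoding as `Y`. -/
def Z (j : Fin n) : (Finset (Fin n) → A k n q) →ₗ[k] (Finset (Fin n) → A k n q) :=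
  LinearMap.pi fun I => ∑ i ∈ I, ((-q) ^ above n I i) •
    ((LinearMap.mulRight k (X k n q i j)) ∘ₗ LinearMap.proj (I.erase i))

/-- The unit `e_∅ ⊗ 1` of `Λ ⊗ A`. -/
def vac : Finset (Fin n) → A k n q := fun I => if I = ∅ then 1 else 0

/-- The product `Y_{c₁} ⋯ Y_{c_t}` in `Λ ⊗ A`. For increasing `c` its coefficient at `e_I` is the
quantum minor with rows `I` and columns `c`, see `qMinor_eq`. -/
def YL (c : List (Fin n)) : Finset (Fin n) → A k n q :=
  c.foldr (fun j f => Y k n q j f) (vac k n q)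

variable {k n q}

lemma Y_apply (j : Fin n) (f : Finset (Fin n) → A k n q) (I : Finset (Fin n)) :
    Y k n q j f I = ∑ i ∈ I, ((-q) ^ below n I i) • (X k n q i j * f (I.erase i)) := by
  simp [Y]

lemma Z_apply (j : Fin n) (f : Finset (Fin n) → A k n q) (I : Finset (Fin n)) :
    Z k n q j f I = ∑ i ∈ I, ((-q) ^ above n I i) • (f (I.erase i) * X k n q i j) := by
  simp [Z]

lemma YL_cons (j : Fin n) (c : List (Fin n)) :
    YL k n q (j :: c) = Y k n q j (YL k n q c) := rfl

lemma X_col {i l : Fin n} (j : Fin n) (h : i < l) :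
    X k n q i j * X k n q l j = q • (X k n q l j * X k n q i j) := by
  simpa [X] using RingQuot.mkAlgHom_rel k (Rel.col (k := k) (q := q) (j := j) h)

lemma X_swap {i j l m : Fin n} (h1 : i < l) (h2 : m < j) :
    X k n q i j * X k n q l m = X k n q l m * X k n q i j := by
  simpa [X] using RingQuot.mkAlgHom_rel k (Rel.swap (k := k) (q := q) h1 h2)

lemma X_mixed {i j l m : Fin n} (h1 : i < l) (h2 : j < m) :
    X k n q i j * X k n q l m = X k n q l m * X k n q i j
      + (q - q⁻¹) • (X k n q i m * X k n q l j) := by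
  simpa [X] using RingQuot.mkAlgHom_rel k (Rel.mixed (k := k) (q := q) h1 h2)

lemma below_erase_of_lt {I : Finset (Fin n)} {i l : Fin n} (hi : i ∈ I) (h : i < l) :
    below n (I.erase i) l + 1 = below n I l := by
  unfold below
  rw [Finset.filter_erase, Finset.card_erase_add_one (by simp [hi, h])]

lemma below_erase_of_le {I : Finset (Fin n)} {i l : Fin n} (h : l ≤ i) :
    below n (I.erase i) l = below n I l := by
  unfold below
  rw [Finset.filter_erase, Finset.erase_eq_of_notMem (by simp [h])]

lemma above_erase_of_lt {I : Finset (Fin n)} {i l : Fin n} (hi : i ∈ I) (h : l < i) :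
    above n (I.erase i) l + 1 = above n I l := by
  unfold above
  rw [Finset.filter_erase, Finset.card_erase_add_one (by simp [hi, h])]

lemma above_erase_of_le {I : Finset (Fin n)} {i l : Fin n} (h : i ≤ l) :
    above n (I.erase i) l = above n I l := by
  unfold above
  rw [Finset.filter_erase, Finset.erase_eq_of_notMem (by simp [h])]

/-- Grouping the ordered pairs of distinct elements of `I` into unordered pairs. -/
lemma sum_pairs {E : Type*} [AddCommMonoid E] (I : Finset (Fin n)) (G : Fin n → Fin n → E) :
    ∑ i ∈ I, ∑ l ∈ I.erase i, G i l =
      ∑ i ∈ I, ∑ l ∈ I with i < l, (G i l + G l i) := by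
  have h : ∀ i ∈ I, ∑ l ∈ I.erase i, G i l =
      (∑ l ∈ I with i < l, G i l) + ∑ l ∈ I with l < i, G i l := by
    intro i hi
    rw [← Finset.sum_union]
    · apply Finset.sum_congr _ (fun _ _ => rfl)
      ext x
      simp only [Finset.mem_erase, Finset.mem_union, Finset.mem_filter]
      rw [ne_iff_lt_or_gt]
      tauto
    · rw [Finset.disjoint_filter]
      intro x _ h1 h2
      exact lt_asymm h1 h2
  rw [Finset.sum_congr rfl h, Finset.sum_add_distrib]
  simp_rw [Finset.sum_add_distrib]
  congr 1
  simp_rw [Finset.sum_filter]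
  rw [Finset.sum_comm]

lemma YY_apply (j m : Fin n) (f : Finset (Fin n) → A k n q) (I : Finset (Fin n)) :
    Y k n q j (Y k n q m f) I = ∑ i ∈ I, ∑ l ∈ I with i < l,
      (-q) ^ (below n I i + below n (I.erase i) l) •
        ((X k n q i j * X k n q l m + (-q) • (X k n q l j * X k n q i m)) *
          f ((I.erase i).erase l)) := by
  simp_rw [Y_apply, Finset.mul_sum, Finset.smul_sum]
  rw [sum_pairs I (fun i l => (-q) ^ below n I i • (X k n q i j * (-q) ^ below n (I.erase i) l •
    (X k n q l m * f ((I.erase i).erase l))))]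
  refine Finset.sum_congr rfl fun i hi => Finset.sum_congr rfl fun l hl => ?_
  obtain ⟨hl, hil⟩ := Finset.mem_filter.1 hl
  rw [← below_erase_of_lt hi hil, below_erase_of_le hil.le, Finset.erase_right_comm (a := l)]
  simp only [mul_smul_comm, smul_smul, add_mul, smul_mul_assoc, smul_add, mul_assoc]
  congr 2
  all_goals ring

lemma Y_sq (s : Fin n) (f : Finset (Fin n) → A k n q) :
    Y k n q s (Y k n q s f) = 0 := by
  funext I
  rw [YY_apply]
  refine Finset.sum_eq_zero fun i hi => Finset.sum_eq_zero fun l hl => ?_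
  rw [X_col s (Finset.mem_filter.1 hl).2, ← add_smul]
  simp

lemma Y_comm (hq : q ≠ 0) {s b : Fin n} (h : s < b) (f : Finset (Fin n) → A k n q) :
    Y k n q b (Y k n q s f) = (-q) • Y k n q s (Y k n q b f) := by
  funext I
  rw [Pi.smul_apply, YY_apply, YY_apply, Finset.smul_sum]
  refine Finset.sum_congr rfl fun i hi => ?_
  rw [Finset.smul_sum]
  refine Finset.sum_congr rfl fun l hl => ?_
  obtain ⟨hl, hil⟩ := Finset.mem_filter.1 hl
  rw [smul_comm]
  congr 1
  refine Eq.trans ?_ (smul_mul_assoc _ _ _)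
  congr 1
  rw [X_mixed hil h, ← X_swap hil h]
  simp only [smul_add, smul_smul]
  have : -q * (q - q⁻¹) = 1 - q * q := by field_simp; ring
  rw [this, sub_smul, one_smul]
  module

/-- Left and right multiplications commute, by associativity of `Λ ⊗ A`. -/
lemma Y_Z (j s : Fin n) (f : Finset (Fin n) → A k n q) :
    Y k n q j (Z k n q s f) = Z k n q s (Y k n q j f) := by
  funext I
  simp_rw [Y_apply, Z_apply, Y_apply, Finset.mul_sum, Finset.sum_mul, Finset.smul_sum]
  rw [Finset.sum_sigma', Finset.sum_sigma']
  refine Finset.sum_bij' (fun p _ => ⟨p.2, p.1⟩) (fun p _ => ⟨p.2, p.1⟩) ?_ ?_ ?_ ?_ ?_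
  · rintro ⟨i, l⟩ h; simp at h ⊢; tauto
  · rintro ⟨i, l⟩ h; simp at h ⊢; tauto
  · rintro ⟨i, l⟩ h; rfl
  · rintro ⟨i, l⟩ h; rfl
  rintro ⟨i, l⟩ h
  simp only [Finset.mem_sigma, Finset.mem_erase] at h
  obtain ⟨hi, hli, hl⟩ := h
  have : below n I i + above n (I.erase i) l = above n I l + below n (I.erase l) i := by
    rcases lt_or_gt_of_ne hli with h | h
    · rw [← below_erase_of_lt hl h, ← above_erase_of_lt hi h]; ring
    · rw [below_erase_of_le h.le, above_erase_of_le h.le]; ring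
  simp only [mul_smul_comm, smul_mul_assoc, smul_smul, ← pow_add, this, mul_assoc]
  rw [Finset.erase_right_comm]

lemma Y_vac (s : Fin n) : Y k n q s (vac k n q) = Z k n q s (vac k n q) := by
  funext I
  rw [Y_apply, Z_apply]
  refine Finset.sum_congr rfl fun i hi => ?_
  by_cases h : I = {i}
  · subst h
    simp [vac, below, above, Finset.filter_singleton]
  · have : I.erase i ≠ ∅ := by
      rw [Ne, Finset.erase_eq_empty_iff]
      rintro (rfl | h')
      · simp at hi
      · exact h h'
    simp [vac, this]

lemma Z_tail (hq : q ≠ 0) (s : Fin n) (B : List (Fin n)) (hB : ∀ b ∈ B, s < b) :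
    Z k n q s (YL k n q B) = (-q) ^ B.length • Y k n q s (YL k n q B) := by
  induction B with
  | nil => simp [YL, Y_vac]
  | cons b B ih =>
    rw [YL_cons, ← Y_Z, ih fun x hx => hB x (by simp [hx]), map_smul, Y_comm hq (hB b (by simp)),
      smul_smul, List.length_cons, pow_succ]

/-- Moving the column `s` to the far right of an increasing product: the Laplace expansion of a
quantum minor along an arbitrary column `s`. -/
lemma Z_split (hq : q ≠ 0) (s : Fin n) (C B : List (Fin n)) (hB : ∀ b ∈ B, s < b) :
    Z k n q s (YL k n q (C ++ B)) = (-q) ^ B.length • YL k n q (C ++ s :: B) := by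
  induction C with
  | nil => exact Z_tail hq s B hB
  | cons a C ih =>
    rw [List.cons_append, List.cons_append, YL_cons, YL_cons, ← Y_Z, ih, map_smul]

/-! ### The operators `T i s` and their action on minors -/

section action

variable {Δ : A k n q →ₐ[k] A k n q ⊗[k] A k n q} {ε : A k n q →ₐ[k] k}
  {r : A k n q →ₗ[k] A k n q →ₗ[k] k}

variable (r) in
/-- The map `A ⊗ A → A`, `a ⊗ b ↦ r(X_{is}, b) a`. -/
def U (i s : Fin n) : A k n q ⊗[k] A k n q →ₗ[k] A k n q :=
  (TensorProduct.rid k (A k n q)).toLinearMap ∘ₗ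
    TensorProduct.map LinearMap.id (r (X k n q i s))

variable (Δ r) in
/-- The operator `a ↦ Σ a₁ r(X_{is}, a₂)` on `A`. -/
def T (i s : Fin n) : A k n q →ₗ[k] A k n q := U r i s ∘ₗ Δ.toLinearMap

lemma U_tmul (i s : Fin n) (a b : A k n q) : U r i s (a ⊗ₜ b) = r (X k n q i s) b • a := by
  simp [U]

lemma r_X_mul (hΔ : IsComul k n q Δ) (hr : IsRForm k n q Δ ε r) (i s : Fin n) (b c : A k n q) :
    r (X k n q i s) (b * c) = ∑ l, r (X k n q l s) b * r (X k n q i l) c := by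
  rw [hr.2.2.1, hΔ]
  simp [biform, mul_comm]

lemma U_mul (hΔ : IsComul k n q Δ) (hr : IsRForm k n q Δ ε r) (i s : Fin n)
    (x y : A k n q ⊗[k] A k n q) : U r i s (x * y) = ∑ l, U r l s x * U r i l y := by
  induction x using TensorProduct.induction_on with
  | zero => simp
  | add x x' hx hx' => simp [add_mul, hx, hx', Finset.sum_add_distrib]
  | tmul a b =>
    induction y using TensorProduct.induction_on with
    | zero => simp
    | add y y' hy hy' => simp [mul_add, hy, hy', Finset.sum_add_distrib]
    | tmul c d =>
      simp only [Algebra.TensorProduct.tmul_mul_tmul, U_tmul, r_X_mul hΔ hr, Finset.sum_smul,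
        smul_mul_smul_comm]

lemma T_mul (hΔ : IsComul k n q Δ) (hr : IsRForm k n q Δ ε r) (i s : Fin n) (x y : A k n q) :
    T Δ r i s (x * y) = ∑ l, T Δ r l s x * T Δ r i l y := by
  simp [T, U_mul hΔ hr]

lemma T_one (hε : IsCounit k n q ε) (hr : IsRForm k n q Δ ε r) (i s : Fin n) :
    T Δ r i s 1 = if i = s then 1 else 0 := by
  simp [T, Algebra.TensorProduct.one_def, U_tmul, (hr.2.2.2.1 _).1, hε i s]

lemma T_X (hΔ : IsComul k n q Δ) (hr : IsRForm k n q Δ ε r) (i s a m : Fin n) :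
    T Δ r i s (X k n q a m) =
      if i = s then (if m = s then q else 1) • X k n q a m
      else if m = i ∧ s < m then (q - q⁻¹) • X k n q a s else 0 := by
  simp only [T, LinearMap.comp_apply, AlgHom.toLinearMap_apply, hΔ a m, map_sum, U_tmul,
    hr.2.2.2.2]
  split_ifs with h h' h'
  · subst h; subst h'
    rw [Finset.sum_eq_single m]
    · simp
    · intro b _ hb; simp [hb]
    · simp
  · subst h
    rw [Finset.sum_eq_single m]
    · simp [Ne.symm h']
    · intro b _ hb; simp [hb]
    · simp
  · obtain ⟨rfl, h'⟩ := h'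
    rw [Finset.sum_eq_single s]
    · simp [h, h']
    · intro b _ hb; simp [hb, h]
    · simp
  · refine Finset.sum_eq_zero fun b _ => ?_
    rw [if_neg (by tauto), if_neg (by tauto), if_neg, zero_smul]
    rintro ⟨rfl, rfl, h''⟩
    exact h' ⟨rfl, h''⟩

/-- A factor `X_{is}` on the right in the first argument of `r` acts by `T i s` on the second. -/
lemma r_mul_X (hr : IsRForm k n q Δ ε r) (a c : A k n q) (i s : Fin n) :
    r (a * X k n q i s) c = r a (T Δ r i s c) := by
  rw [hr.2.1]
  simp only [T, LinearMap.comp_apply, AlgHom.toLinearMap_apply]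
  induction Δ c using TensorProduct.induction_on with
  | zero => simp
  | add x x' hx hx' => simp [hx, hx']
  | tmul x y => simp [biform, U_tmul, mul_comm]

/-- Commutation of `T i s`, acting coefficientwise on `Λ ⊗ A`, with multiplication by `Y_m`. -/
lemma T_Y (hΔ : IsComul k n q Δ) (hr : IsRForm k n q Δ ε r) (i s m : Fin n)
    (f : Finset (Fin n) → A k n q) (I : Finset (Fin n)) :
    T Δ r i s (Y k n q m f I) =
      (if m = s then q else 1) • Y k n q m (fun K => T Δ r i s (f K)) I +
      if s < m then (q - q⁻¹) • Y k n q s (fun K => T Δ r i m (f K)) I else 0 := by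
  have key : ∀ a K, T Δ r i s (X k n q a m * f K) =
      (if m = s then q else 1) • (X k n q a m * T Δ r i s (f K)) +
      if s < m then (q - q⁻¹) • (X k n q a s * T Δ r i m (f K)) else 0 := by
    intro a K
    rw [T_mul hΔ hr]
    simp only [T_X hΔ hr]
    by_cases h : s < m
    · rw [Fintype.sum_eq_add s m h.ne]
      · simp [h.ne', h]
      · rintro x ⟨h1, h2⟩; simp [h1, Ne.symm h2]
    · rw [Fintype.sum_eq_single s]
      · simp [h]
      · intro x h1; simp [h1, h]
  simp only [Y_apply, map_sum, map_smul, key, smul_add, Finset.sum_add_distrib]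
  congr 1
  · rw [Finset.smul_sum]
    exact Finset.sum_congr rfl fun _ _ => smul_comm _ _ _
  · split_ifs
    · rw [Finset.smul_sum]
      exact Finset.sum_congr rfl fun _ _ => smul_comm _ _ _
    · simp

/-- After multiplication by `Y_s`, the operator `T i s` passes through columns larger than `s`: the
correction terms of `T_Y` contain `Y_s` twice and vanish. -/
lemma Y_T_tail (hq : q ≠ 0) (hΔ : IsComul k n q Δ) (hε : IsCounit k n q ε)
    (hr : IsRForm k n q Δ ε r) (i s : Fin n) (B : List (Fin n)) (hB : ∀ b ∈ B, s < b) :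
    Y k n q s (fun K => T Δ r i s (YL k n q B K)) =
      (if i = s then (1 : k) else 0) • Y k n q s (YL k n q B) := by
  induction B with
  | nil =>
    rw [← map_smul]
    congr 1
    funext K
    by_cases hK : K = ∅ <;> by_cases h : i = s <;> simp [YL, vac, hK, h, T_one hε hr]
  | cons b B ih =>
    have hb := hB b (by simp)
    have ih := ih fun x hx => hB x (by simp [hx])
    have e : (fun K => T Δ r i s (YL k n q (b :: B) K)) =
        Y k n q b (fun K => T Δ r i s (YL k n q B K)) +
        (q - q⁻¹) • Y k n q s (fun K => T Δ r i b (YL k n q B K)) := by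
      funext K
      rw [YL_cons, T_Y hΔ hr, if_neg hb.ne', if_pos hb, one_smul]
      rfl
    have hq' : (-q) ≠ 0 := neg_ne_zero.2 hq
    have hc : ∀ f, Y k n q s (Y k n q b f) = (-q)⁻¹ • Y k n q b (Y k n q s f) := by
      intro f
      rw [Y_comm hq hb, smul_smul, inv_mul_cancel₀ hq', one_smul]
    rw [e, map_add, map_smul, Y_sq, smul_zero, add_zero, YL_cons, hc, ih, map_smul, hc, smul_comm]

/-- A minor containing the column `s` is an eigenvector of `T s s` with eigenvalue `q` and is killed
by `T i s` for `i ≠ s`. -/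
lemma T_YL (hq : q ≠ 0) (hΔ : IsComul k n q Δ) (hε : IsCounit k n q ε)
    (hr : IsRForm k n q Δ ε r) (i s : Fin n) (C B : List (Fin n)) (hC : ∀ b ∈ C, b < s)
    (hB : ∀ b ∈ B, s < b) :
    (fun K => T Δ r i s (YL k n q (C ++ s :: B) K)) =
      (if i = s then q else 0) • YL k n q (C ++ s :: B) := by
  induction C with
  | nil =>
    have : (fun K => T Δ r i s (YL k n q (s :: B) K)) =
        q • Y k n q s (fun K => T Δ r i s (YL k n q B K)) := by
      funext K
      rw [YL_cons, T_Y hΔ hr, if_pos rfl, if_neg (lt_irrefl _), add_zero]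
      rfl
    rw [List.nil_append, this, Y_T_tail hq hΔ hε hr i s B hB, smul_smul, YL_cons]
    simp
  | cons a C ih =>
    have ha := hC a (by simp)
    have ih := ih fun x hx => hC x (by simp [hx])
    have : (fun K => T Δ r i s (YL k n q ((a :: C) ++ s :: B) K)) =
        Y k n q a (fun K => T Δ r i s (YL k n q (C ++ s :: B) K)) := by
      funext K
      rw [List.cons_append, YL_cons, T_Y hΔ hr, if_neg ha.ne, if_neg ha.not_gt, add_zero,
        one_smul]
    rw [this, ih, map_smul]
    rfl

/-! ### Removing common indices -/

lemma sort_split {N : Finset (Fin n)} {s : Fin n} (hs : s ∈ N) :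
    ∃ C B : List (Fin n), N.sort (· ≤ ·) = C ++ s :: B ∧ (N.erase s).sort (· ≤ ·) = C ++ B ∧
      (∀ b ∈ C, b < s) ∧ (∀ b ∈ B, s < b) ∧ B.length = above n N s := by
  obtain ⟨C, B, h⟩ := List.append_of_mem ((Finset.mem_sort (· ≤ ·)).2 hs)
  have hlt : (N.sort (· ≤ ·)).Pairwise (· < ·) := Finset.sortedLT_sort N |>.pairwise
  rw [h, List.pairwise_append, List.pairwise_cons] at hlt
  obtain ⟨hC, ⟨hsB, hB⟩, hCB⟩ := hlt
  have hCs : ∀ b ∈ C, b < s := fun b hb => hCB b hb s (by simp)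
  have hCBp : (C ++ B).Pairwise (· < ·) :=
    List.pairwise_append.2 ⟨hC, hB, fun a ha b hb => hCB a ha b (by simp [hb])⟩
  have hmem : ∀ x, x ∈ N ↔ x ∈ C ∨ x = s ∨ x ∈ B := by
    intro x
    rw [← Finset.mem_sort (· ≤ ·), h]
    simp
  refine ⟨C, B, h, ?_, hCs, hsB, ?_⟩
  · have e : N.erase s = (C ++ B).toFinset := by
      ext x
      simp only [Finset.mem_erase, hmem, List.mem_toFinset, List.mem_append]
      constructor
      · tauto
      · rintro (hx | hx)
        · exact ⟨(hCs x hx).ne, by tauto⟩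
        · exact ⟨(hsB x hx).ne', by tauto⟩
    rw [e]
    exact (List.toFinset_sort (r := (· ≤ ·)) (hCBp.imp ne_of_lt)).2 (hCBp.imp le_of_lt)
  · have e : (N.filter fun x => s < x) = B.toFinset := by
      ext x
      simp only [Finset.mem_filter, hmem, List.mem_toFinset]
      constructor
      · rintro ⟨hx | rfl | hx, h'⟩
        · exact absurd (hCs x hx) h'.not_gt
        · exact absurd h' (lt_irrefl _)
        · exact hx
      · exact fun hx => ⟨by tauto, hsB x hx⟩
    rw [above, e, List.toFinset_card_of_nodup (hB.imp ne_of_lt)]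

/-- The reduction formula for a single index `s`: only the term `i = s` of the Laplace expansion
along column `s` pairs nontrivially with a minor containing column `s`. -/
lemma one_step (hq : q ≠ 0) (hΔ : IsComul k n q Δ) (hε : IsCounit k n q ε)
    (hr : IsRForm k n q Δ ε r) (I J M N : Finset (Fin n)) (s : Fin n) (hI : s ∈ I) (hJ : s ∈ J)
    (hN : s ∈ N) :
    r (YL k n q (J.sort (· ≤ ·)) I) (YL k n q (N.sort (· ≤ ·)) M) =
      q * (-q) ^ ((above n I s : ℤ) - above n J s) *
        r (YL k n q ((J.erase s).sort (· ≤ ·)) (I.erase s)) (YL k n q (N.sort (· ≤ ·)) M) := by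
  obtain ⟨C, B, h1, h2, -, hB, hlen⟩ := sort_split hJ
  obtain ⟨C', B', h1', -, hC', hB', -⟩ := sort_split hN
  have hq' : (-q) ≠ 0 := neg_ne_zero.2 hq
  have hT : ∀ i, T Δ r i s (YL k n q (N.sort (· ≤ ·)) M) =
      (if i = s then q else 0) • YL k n q (N.sort (· ≤ ·)) M := by
    intro i
    rw [h1']
    exact congrFun (T_YL hq hΔ hε hr i s C' B' hC' hB') M
  generalize YL k n q (N.sort (· ≤ ·)) M = c at hT ⊢
  have hZ := congrFun (Z_split hq s C B hB) I
  rw [← h1, ← h2, hlen, Pi.smul_apply, Z_apply] at hZ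
  have := congrArg (fun x => r x c) hZ
  simp only [map_sum, map_smul, LinearMap.sum_apply, LinearMap.smul_apply, r_mul_X hr, hT] at this
  rw [Finset.sum_eq_single s (by intro b _ hb; simp [hb]) (by simp [hI])] at this
  rw [zpow_sub₀ hq', zpow_natCast, zpow_natCast]
  simp only [if_pos, smul_eq_mul] at this
  field_simp
  linear_combination -this

lemma ell_cons (I S : Finset (Fin n)) (s : Fin n) (hs : s ∉ S) :
    ell n I (insert s S) = above n I s + ell n I S := by
  unfold ell above
  simp only [Finset.card_filter, Finset.sum_product_right]
  rw [Finset.sum_insert hs]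

lemma ell_erase (I S : Finset (Fin n)) (s : Fin n) (hs : s ∈ I) :
    ell n I S = ell n (I.erase s) S + ell n {s} S := by
  unfold ell
  simp only [Finset.card_filter, Finset.sum_product]
  rw [← Finset.sum_erase_add _ _ hs, Finset.sum_singleton]

/-- Iteration of `one_step` over `S`. The indices already removed contribute equally to both
exponents, so the total is `ℓ(I;S) - ℓ(J;S)`. -/
lemma many_steps (hq : q ≠ 0) (hΔ : IsComul k n q Δ) (hε : IsCounit k n q ε)
    (hr : IsRForm k n q Δ ε r) (M N S : Finset (Fin n)) (hN : S ⊆ N) :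
    ∀ I J : Finset (Fin n), S ⊆ I → S ⊆ J →
    r (YL k n q (J.sort (· ≤ ·)) I) (YL k n q (N.sort (· ≤ ·)) M) =
      q ^ S.card * (-q) ^ ((ell n I S : ℤ) - ell n J S) *
        r (YL k n q ((J \ S).sort (· ≤ ·)) (I \ S)) (YL k n q (N.sort (· ≤ ·)) M) := by
  induction S using Finset.induction_on with
  | empty => intro I J _ _; simp [ell]
  | insert s S hs ih =>
    intro I J hI hJ
    rw [Finset.insert_subset_iff] at hI hJ hN
    rw [one_step hq hΔ hε hr I J M N s hI.1 hJ.1 hN.1,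
      ih hN.2 _ _ (Finset.subset_erase.2 ⟨hI.2, hs⟩) (Finset.subset_erase.2 ⟨hJ.2, hs⟩),
      ell_cons I S s hs, ell_cons J S s hs, ell_erase I S s hI.1, ell_erase J S s hJ.1,
      Finset.card_insert_of_notMem hs, Finset.sdiff_insert, Finset.sdiff_insert,
      Finset.erase_sdiff_comm, Finset.erase_sdiff_comm]
    have hq' : (-q) ≠ 0 := neg_ne_zero.2 hq
    have e : (((above n I s + (ell n (I.erase s) S + ell n {s} S) : ℕ) : ℤ) -
        ((above n J s + (ell n (J.erase s) S + ell n {s} S) : ℕ) : ℤ)) =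
        ((above n I s : ℤ) - above n J s) + ((ell n (I.erase s) S : ℤ) - ell n (J.erase s) S) := by
      push_cast; ring
    rw [e, zpow_add₀ hq']
    ring

end action

/-! ### Identification with the permutation expansion -/

/-- The number of inversions of a word. -/
def inv {t : ℕ} (f : Fin t → Fin n) : ℕ :=
  (Finset.univ.filter fun p : Fin t × Fin t => p.1 < p.2 ∧ f p.2 < f p.1).card

lemma inv_cons {t : ℕ} (i : Fin n) (f : Fin t → Fin n) :
    inv (Fin.cons i f : Fin (t + 1) → Fin n) =
      (Finset.univ.filter fun l => f l < i).card + inv f := by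
  unfold inv
  simp only [Finset.card_filter, ← Finset.univ_product_univ, Finset.sum_product,
    Fin.sum_univ_succ, Fin.cons_zero, Fin.cons_succ]
  simp [Fin.succ_lt_succ_iff]

/-- Words enumerating `I`, each element once. -/
def IsEnum {t : ℕ} (f : Fin t → Fin n) (I : Finset (Fin n)) : Prop :=
  Function.Injective f ∧ Finset.univ.image f = I

lemma isEnum_cons {t : ℕ} (i : Fin n) (f : Fin t → Fin n) (I : Finset (Fin n)) :
    IsEnum (Fin.cons i f : Fin (t + 1) → Fin n) I ↔ i ∈ I ∧ IsEnum f (I.erase i) := by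
  unfold IsEnum
  rw [Fin.cons_injective_iff]
  have : Finset.univ.image (Fin.cons i f : Fin (t + 1) → Fin n) =
      insert i (Finset.univ.image f) := by
    ext x
    simp [Fin.exists_fin_succ, eq_comm]
  rw [this]
  have hr : i ∉ Set.range f ↔ i ∉ Finset.univ.image f := by simp
  rw [hr]
  constructor
  · rintro ⟨⟨h1, h2⟩, rfl⟩
    exact ⟨by simp, h2, by rw [Finset.erase_insert h1]⟩
  · rintro ⟨h1, h2, h3⟩
    exact ⟨⟨by simp [h3], h2⟩, by rw [h3, Finset.insert_erase h1]⟩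

/-- Full expansion of a product of the `Y`'s, as a sum over words rather than permutations: this is
the form that is compatible with adding a first letter. -/
lemma YL_ofFn {t : ℕ} (c : Fin t → Fin n) (I : Finset (Fin n)) :
    YL k n q (List.ofFn c) I = ∑ f : Fin t → Fin n with IsEnum f I,
      (-q) ^ inv f • (List.ofFn fun l => X k n q (f l) (c l)).prod := by
  induction t generalizing I with
  | zero =>
    rw [Finset.sum_filter]
    simp [YL, vac, IsEnum, Function.injective_of_subsingleton, inv, eq_comm]
  | succ t ih =>
    have hce : ∀ (i : Fin n) (f : Fin t → Fin n),
        (Fin.consEquiv fun _ => Fin n) (i, f) = (Fin.cons i f : Fin (t + 1) → Fin n) :=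
      fun _ _ => rfl
    rw [List.ofFn_succ, YL_cons, Y_apply, Finset.sum_filter,
      ← (Fin.consEquiv fun _ => Fin n).sum_comp, Fintype.sum_prod_type,
      ← Finset.sum_subset (Finset.subset_univ I)]
    · refine Finset.sum_congr rfl fun i hi => ?_
      rw [ih, Finset.mul_sum, Finset.smul_sum, Finset.sum_filter]
      refine Finset.sum_congr rfl fun f _ => ?_
      simp only [hce, isEnum_cons, hi, true_and]
      split_ifs with h
      · have e : below n I i = (Finset.univ.filter fun l => f l < i).card := by
          rw [← below_erase_of_le le_rfl, below, ← h.2, Finset.filter_image,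
            Finset.card_image_of_injective _ h.1]
        rw [inv_cons, List.ofFn_succ, List.prod_cons, mul_smul_comm, smul_smul, ← pow_add, e]
        simp
      · rfl
    · intro i _ hi
      refine Finset.sum_eq_zero fun f _ => ?_
      simp [hce, isEnum_cons, hi]

lemma qMinor_eq (I J : Finset (Fin n)) (h : I.card = J.card) :
    qMinor k n q I J = YL k n q (J.sort (· ≤ ·)) I := by
  have hs : J.sort (· ≤ ·) = List.ofFn fun l : Fin I.card =>
      ((J.orderIsoOfFin h.symm l : J) : Fin n) := by
    refine List.ext_getElem (by simp [h]) fun a h1 h2 => ?_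
    simp [Finset.orderEmbOfFin_apply]
  rw [hs, YL_ofFn, qMinor, dif_pos h]
  refine Finset.sum_bij (fun σ _ l => ((I.orderIsoOfFin rfl (σ l) : I) : Fin n)) ?_ ?_ ?_ ?_
  · intro σ _
    refine Finset.mem_filter.2 ⟨Finset.mem_univ _, ?_, ?_⟩
    · intro a b hab
      simpa using hab
    · ext x
      simp only [Finset.mem_image, Finset.mem_univ, true_and]
      constructor
      · rintro ⟨a, rfl⟩; exact Subtype.prop _
      · intro hx
        exact ⟨σ.symm ((I.orderIsoOfFin rfl).symm ⟨x, hx⟩), by simp⟩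
  · intro σ _ τ _ hst
    ext l
    have := congrFun hst l
    simpa [Fin.ext_iff] using this
  · intro f hf
    obtain ⟨-, h1, h2⟩ := Finset.mem_filter.1 hf
    have hfI : ∀ l, f l ∈ I := fun l => h2 ▸ Finset.mem_image_of_mem f (Finset.mem_univ l)
    let g : Fin I.card → Fin I.card := fun l => (I.orderIsoOfFin rfl).symm ⟨f l, hfI l⟩
    have hg : Function.Injective g := by
      intro a b hab
      exact h1 (by simpa [g] using hab)
    refine ⟨Equiv.ofBijective g (Finite.injective_iff_bijective.1 hg), Finset.mem_univ _, ?_⟩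
    funext l
    simp [g]
  · intro σ _
    congr 2
    simp [inversions, inv]

end QMat

open QMat

/-- The reduction formula of Lemma 4.2(b). -/
theorem stmt11 (k : Type*) [Field k] (n : ℕ) (hn : 0 < n) (q : k) (hq : q ≠ 0)
    (Δ : A k n q →ₐ[k] A k n q ⊗[k] A k n q) (ε : A k n q →ₐ[k] k)
    (hΔ : IsComul k n q Δ) (hε : IsCounit k n q ε)
    (r : A k n q →ₗ[k] A k n q →ₗ[k] k) (hr : IsRForm k n q Δ ε r)
    (I J M N : Finset (Fin n)) (hIJ : I.card = J.card) (hMN : M.card = N.card)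
    (h1 : I ∩ M = J ∩ N) (h2 : I ∪ M = J ∪ N) :
    r (qMinor k n q I J) (qMinor k n q M N) =
      q ^ (I ∩ M).card * (-q) ^ ((ell n I (J ∩ N) : ℤ) - (ell n J (I ∩ M) : ℤ)) *
        r (qMinor k n q (I \ M) (J \ N)) (qMinor k n q M N) := by
  have hS : I ∩ M ⊆ N := by rw [h1]; exact Finset.inter_subset_right
  have hSJ : I ∩ M ⊆ J := by rw [h1]; exact Finset.inter_subset_left
  have eI : I \ M = I \ (I ∩ M) := by simp
  have eJ : J \ N = J \ (I ∩ M) := by rw [h1]; simp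
  have hc : (I \ (I ∩ M)).card = (J \ (I ∩ M)).card := by
    rw [Finset.card_sdiff_of_subset Finset.inter_subset_left, Finset.card_sdiff_of_subset hSJ, hIJ]
  rw [← h1, eI, eJ, qMinor_eq I J hIJ, qMinor_eq M N hMN, qMinor_eq _ _ hc]
  exact many_steps hq hΔ hε hr M N (I ∩ M) hS I J Finset.inter_subset_left hSJ

end
end

section
/- Let I,J ⊆ {1,…,n} with |I| = |J|, I∩J = ∅, I ≥ J, and I ≠ J. Then r([I|J],[J|I]) = q̂^{|I|} (−q)^{ℓ(J;I) − ℓ(I;I)} ξ_q(I;J). -/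
/-!
The value `r([I|J],[J|I])` is computed through the quantum exterior algebra `Λ`, with basis `e_S`
for `S ⊆ {1,…,n}` and relations `e_a² = 0`, `e_b e_a = -q e_a e_b` for `a < b`. The coaction
`e_b ↦ Σ_a e_a ⊗ X_{ab}` makes every functional on `O_q(M_n(k))` act on `Λ`, and the value of the
functional at `[M|N]` is the coefficient of `e_M` in its action on `e_N` (`r_qMinor`).

By condition (iii), the functionals `r(X_{ij}, ·)` satisfy a twisted Leibniz rule on products in `Λ`,
and this determines their action (`act_wedge`, `coact_gen`): `r(X_{ii}, ·)` is diagonal,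
`r(X_{ij}, ·)` vanishes for `i < j`, and for `j < i` it sends `e_S` with `i ∈ S`, `j ∉ S` to
`q̂ (-q)^{-|S ∩ (j,i)|} e_{(S ∖ i) ∪ j}`. By condition (ii), a product of generators acts by the
composite of these operators (`coact_mon`).

Expanding `[I|J]` over permutations `σ`, each term must carry `e_I` to `e_J` by moving every
`i_{σ(p)}` to `j_p`. As `I ∩ J = ∅`, no diagonal step occurs, so the term is a single power of `-q`
times `q̂^{|I|}` if `j_p < i_{σ(p)}` for all `p`, and zero otherwise (`acts_single`). Together with
the sign `(-q)^{ℓ(σ)}` the exponent simplifies to `-2` times a count of pairs (`exponent_eq`).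
What remains is a weighted sum over rook placements; filling the rows `i_1 < i_2 < ⋯` in order, row
`l` has `d_l` admissible columns irrespective of the earlier choices, which gives the product
`∏_l (1 + q⁻² + ⋯ + q^{-2(d_l - 1)})` (`rook`). Renormalizing each factor to `[d_l]_{-q}` costs
`(-q)^{Σ (d_l - 1)}`, and `Σ (d_l - 1) = ℓ(I;I) - ℓ(J;I)`.
-/


open scoped TensorProduct
open scoped Classical

noncomputable section

open QMat

namespace QMinorPairing

section

variable {k : Type*} [Field k] {n : ℕ}

/-! ### Operators on the quantum exterior algebra -/

/-- The number of elements of `S` below `a`, as an integer. -/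
def below (S : Finset (Fin n)) (a : Fin n) : ℤ := ∑ x ∈ S, if x < a then 1 else 0

/-- The number of elements of `S` strictly between `j` and `i`, as an integer. -/
def between (S : Finset (Fin n)) (j i : Fin n) : ℤ := ∑ x ∈ S, if j < x ∧ x < i then 1 else 0

lemma below_eq (S : Finset (Fin n)) {j i : Fin n} (h : j < i) :
    below S i = below S j + between S j i + if j ∈ S then 1 else 0 := by
  unfold below between
  rw [← Finset.sum_ite_eq S j (fun _ => (1 : ℤ)), ← Finset.sum_add_distrib,
    ← Finset.sum_add_distrib]
  refine Finset.sum_congr rfl fun x _ => ?_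
  split_ifs <;> first | rfl | omega

lemma between_split (S : Finset (Fin n)) {j b i : Fin n} (h : j < b) (h' : b < i) :
    between S j i = between S j b + between S b i + if b ∈ S then 1 else 0 := by
  unfold between
  rw [← Finset.sum_ite_eq S b (fun _ => (1 : ℤ)), ← Finset.sum_add_distrib,
    ← Finset.sum_add_distrib]
  refine Finset.sum_congr rfl fun x _ => ?_
  split_ifs <;> first | rfl | omega

lemma below_insert {S : Finset (Fin n)} {b : Fin n} (hb : b ∉ S) (a : Fin n) :
    below (insert b S) a = (if b < a then 1 else 0) + below S a :=
  Finset.sum_insert hb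

lemma between_insert {S : Finset (Fin n)} {b : Fin n} (hb : b ∉ S) (j i : Fin n) :
    between (insert b S) j i = (if j < b ∧ b < i then 1 else 0) + between S j i :=
  Finset.sum_insert hb

lemma below_erase {S : Finset (Fin n)} {b : Fin n} (hb : b ∈ S) (a : Fin n) :
    below (S.erase b) a = below S a - if b < a then 1 else 0 :=
  Finset.sum_erase_eq_sub hb

/-- Left multiplication by the generator `e_a` of the quantum exterior algebra, in the basis
`e_S` (`S ⊆ {1,…,n}`); the relations are `e_a² = 0` and `e_b e_a = -q e_a e_b` for `a < b`. -/
def wedge (q : k) (a : Fin n) : (Finset (Fin n) →₀ k) →ₗ[k] (Finset (Fin n) →₀ k) :=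
  Finsupp.linearCombination k fun S =>
    if a ∈ S then 0 else Finsupp.single (insert a S) ((-q) ^ below S a)

/-- The operator by which `r(X_{ij}, ·)` acts on the quantum exterior algebra. It is lower
triangular: diagonal for `i = j`, replaces `i` by `j` for `j < i`, and vanishes for `i < j`. -/
def act (q : k) (i j : Fin n) : (Finset (Fin n) →₀ k) →ₗ[k] (Finset (Fin n) →₀ k) :=
  Finsupp.linearCombination k fun S =>
    if i = j then Finsupp.single S (if i ∈ S then q else 1)
    else if j < i ∧ i ∈ S ∧ j ∉ S then
      Finsupp.single (insert j (S.erase i)) ((q - q⁻¹) * (-q) ^ (-between S j i))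
    else 0

lemma wedge_single (q : k) (a : Fin n) (S : Finset (Fin n)) (c : k) :
    wedge q a (Finsupp.single S c) =
      if a ∈ S then 0 else Finsupp.single (insert a S) (c * (-q) ^ below S a) := by
  simp only [wedge, Finsupp.linearCombination_single]
  split_ifs
  · rw [smul_zero]
  · rw [Finsupp.smul_single, smul_eq_mul]

lemma act_single_self (q : k) (i : Fin n) (S : Finset (Fin n)) (c : k) :
    act q i i (Finsupp.single S c) = Finsupp.single S (c * if i ∈ S then q else 1) := by
  simp only [act, Finsupp.linearCombination_single, if_true, Finsupp.smul_single, smul_eq_mul]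

lemma act_single_of_lt (q : k) {i j : Fin n} (h : j < i) (S : Finset (Fin n)) (c : k) :
    act q i j (Finsupp.single S c) =
      if i ∈ S ∧ j ∉ S then
        Finsupp.single (insert j (S.erase i)) (c * ((q - q⁻¹) * (-q) ^ (-between S j i)))
      else 0 := by
  simp only [act, Finsupp.linearCombination_single, h.ne', if_false, h, true_and]
  split_ifs
  · rw [Finsupp.smul_single, smul_eq_mul]
  · rw [smul_zero]

lemma act_of_gt (q : k) {i j : Fin n} (h : i < j) : act q i j = 0 := by
  ext S : 2
  simp [act, h.ne, h.not_gt]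

/-- The commutation of `act` with left multiplication: the module-algebra property of the
quantum exterior algebra under the functionals `r(X_{ij}, ·)`. -/
lemma act_wedge {q : k} (hq : q ≠ 0) (i j b : Fin n) (v : Finset (Fin n) →₀ k) :
    act q i j (wedge q b v) =
      (if j = b then q else 1) • wedge q b (act q i j v) +
        if j < b then (q - q⁻¹) • wedge q j (act q i b v) else 0 := by
  have hq' : -q ≠ 0 := neg_ne_zero.mpr hq
  induction v using Finsupp.induction_linear with
  | zero => simp
  | add f g hf hg =>
    simp only [map_add, hf, hg, smul_add]
    by_cases h : j < b
    · rw [if_pos h, if_pos h, if_pos h]; abel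
    · rw [if_neg h, if_neg h, if_neg h]; abel
  | single S c =>
  rcases lt_trichotomy i j with h | rfl | h
  · rw [act_of_gt q h]
    split_ifs with h1 h2 h2
    · simp [act_of_gt q (h.trans h2)]
    · simp
    · simp [act_of_gt q (h.trans h2)]
    · simp
  · have h0 : (if i < b then (q - q⁻¹) • wedge q i (act q i b (Finsupp.single S c)) else 0) = 0 := by
      split_ifs with h
      · simp [act_of_gt q h]
      · rfl
    rw [h0, add_zero, act_single_self, wedge_single, wedge_single]
    by_cases hb : b ∈ S
    · simp [hb]
    · simp only [hb, if_false, act_single_self, Finsupp.smul_single, smul_eq_mul,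
        Finset.mem_insert]
      congr 1
      by_cases hib : i = b
      · subst hib; simp [hb, mul_comm]
      · simp [hib, mul_right_comm]
  · rw [act_single_of_lt q h, wedge_single]
    rcases lt_trichotomy j b with hjb | rfl | hbj
    · rw [if_neg hjb.ne, if_pos hjb, one_smul]
      rcases lt_trichotomy b i with hbi | rfl | hib
      · -- `j < b < i`
        rw [act_single_of_lt q hbi]
        by_cases hb : b ∈ S
        · simp only [hb, if_true, not_true, and_false, if_false, map_zero, smul_zero, add_zero]
          split_ifs
          · rw [wedge_single, if_pos (by simp [hb, hbi.ne])]
          · simp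
        by_cases hi : i ∈ S
        · by_cases hj : j ∈ S
          · rw [if_neg hb, act_single_of_lt q h, if_neg (by simp [hj]), if_neg (by simp [hj]),
              if_pos ⟨hi, hb⟩, wedge_single, if_pos (by simp [hj, h.ne])]
            simp
          · have e1 : insert j ((insert b S).erase i) = insert b (insert j (S.erase i)) := by
              rw [Finset.erase_insert_of_ne hbi.ne, Finset.insert_comm]
            have e2 : insert j (insert b (S.erase i)) = insert b (insert j (S.erase i)) :=
              Finset.insert_comm _ _ _
            rw [if_neg hb, act_single_of_lt q h, if_pos (by simp [hi, hj, hjb.ne]),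
              if_pos ⟨hi, hj⟩, if_pos ⟨hi, hb⟩, wedge_single, wedge_single,
              if_neg (by simp [hb, hjb.ne']), if_neg (by simp [hj, hjb.ne]), e1, e2,
              Finsupp.smul_single, ← Finsupp.single_add]
            congr 1
            rw [between_insert hb, if_pos ⟨hjb, hbi⟩, below_insert (by simp [hj]), if_pos hjb,
              below_erase hi, if_neg hbi.not_gt, below_insert (by simp [hb]),
              if_neg hjb.not_gt, below_erase hi, if_neg h.not_gt, below_eq S hjb, if_neg hj,
              between_split S hjb hbi, if_neg hb]
            simp only [zpow_add₀ hq', neg_add, zpow_neg, smul_eq_mul,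
              zpow_one, sub_zero, zero_add, add_zero]
            have hA := zpow_ne_zero (between S j b) hq'
            have hB := zpow_ne_zero (between S b i) hq'
            field_simp
            ring
        · rw [if_neg hb, act_single_of_lt q h, if_neg (by simp [hi, hbi.ne']), if_neg (by simp [hi]),
            if_neg (by simp [hi])]
          simp
      · -- `b = i`
        rw [act_single_self]
        by_cases hb : b ∈ S
        · by_cases hj : j ∈ S
          · rw [wedge_single, if_pos hj]
            simp [hb, hj]
          · have e1 : insert b (insert j (S.erase b)) = insert j S := by
              rw [Finset.insert_comm, Finset.insert_erase hb]
            rw [if_pos hb, map_zero, if_pos ⟨hb, hj⟩, wedge_single, wedge_single, if_pos hb,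
              if_neg (by simp [h.ne']), if_neg hj, e1, Finsupp.smul_single, ← Finsupp.single_add,
              eq_comm, Finsupp.single_eq_zero, below_insert (by simp [hj]), if_pos h,
              below_erase hb, if_neg (lt_irrefl _), below_eq S h, if_neg hj]
            simp only [zpow_add₀ hq', zpow_neg, smul_eq_mul,
              zpow_one, sub_zero, add_zero]
            have hA := zpow_ne_zero (between S j b) hq'
            field_simp
            ring
        · rw [if_neg hb, act_single_of_lt q h, if_neg (c := b ∈ S ∧ j ∉ S) (by simp [hb]),
            map_zero, zero_add, wedge_single]
          by_cases hj : j ∈ S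
          · simp [hj]
          · rw [if_pos (by simp [hj, h.ne]), if_neg hj, Finset.erase_insert hb, if_neg hb,
              Finsupp.smul_single, between_insert hb, if_neg (by simp), below_eq S h, if_neg hj]
            congr 1
            simp only [zpow_add₀ hq', zpow_neg, smul_eq_mul, zero_add, add_zero]
            have hA := zpow_ne_zero (between S j b) hq'
            field_simp
      · -- `i < b`
        rw [act_of_gt q hib]
        by_cases hb : b ∈ S
        · simp only [hb, if_true, map_zero, LinearMap.zero_apply, smul_zero, add_zero]
          split_ifs
          · rw [wedge_single, if_pos (by simp [hb, hib.ne'])]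
          · simp
        · rw [if_neg hb, act_single_of_lt q h]
          by_cases hij : i ∈ S ∧ j ∉ S
          · have e1 : insert j ((insert b S).erase i) = insert b (insert j (S.erase i)) := by
              rw [Finset.erase_insert_of_ne hib.ne', Finset.insert_comm]
            rw [if_pos hij, if_pos (by simp [hij, hjb.ne]), wedge_single,
              if_neg (by simp [hb, hjb.ne']), e1, between_insert hb,
              if_neg (by simp [hib.le]), below_insert (by simp [hij]),
              if_pos hjb, below_erase hij.1, if_pos hib]
            simp only [LinearMap.zero_apply, map_zero, smul_zero, add_zero]
            congr 1
            simp only [zero_add, add_sub_cancel]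
            ring
          · rw [if_neg hij, if_neg (by simpa [hib.ne, hjb.ne] using hij)]
            simp
    · -- `b = j`
      rw [if_neg (lt_irrefl _), add_zero]
      have hl : act q i j (if j ∈ S then 0 else
          Finsupp.single (insert j S) (c * (-q) ^ below S j)) = 0 := by
        split_ifs
        · simp
        · rw [act_single_of_lt q h, if_neg (by simp)]
      rw [hl]
      split_ifs
      · rw [wedge_single, if_pos (by simp), smul_zero]
      · simp
      · rw [wedge_single, if_pos (by simp), smul_zero]
      · simp
    · -- `b < j`
      rw [if_neg hbj.ne', if_neg hbj.not_gt, one_smul, add_zero]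
      by_cases hb : b ∈ S
      · simp only [hb, if_true, map_zero]
        split_ifs
        · rw [wedge_single, if_pos (by simp [hb, (hbj.trans h).ne])]
        · simp
      · rw [if_neg hb, act_single_of_lt q h]
        by_cases hij : i ∈ S ∧ j ∉ S
        · have e1 : insert j ((insert b S).erase i) = insert b (insert j (S.erase i)) := by
            rw [Finset.erase_insert_of_ne (hbj.trans h).ne, Finset.insert_comm]
          rw [if_pos hij, if_pos (by simp [hij, hbj.ne']), wedge_single,
            if_neg (by simp [hb, hbj.ne]), e1, between_insert hb,
            if_neg (by simp [hbj.le]), below_insert (by simp [hij]),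
            if_neg hbj.not_gt, below_erase hij.1, if_neg (hbj.trans h).not_gt]
          congr 1
          simp only [zero_add, sub_zero]
          ring
        · rw [if_neg hij, if_neg (by simpa [(hbj.trans h).ne', hbj.ne'] using hij)]
          simp

/-! ### Minors and the form `r` through the quantum exterior algebra -/

/-- The monomial `X_{a₁b₁} ⋯ X_{a_tb_t}`. -/
def mon (q : k) {t : ℕ} (a b : Fin t → Fin n) : A k n q :=
  (List.ofFn fun l => X k n q (a l) (b l)).prod

lemma mon_zero (q : k) (a b : Fin 0 → Fin n) : mon q a b = 1 := by
  simp [mon]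

lemma mon_cons (q : k) {t : ℕ} (x y : Fin n) (a b : Fin t → Fin n) :
    mon q (Fin.cons x a : Fin (t + 1) → Fin n) (Fin.cons y b : Fin (t + 1) → Fin n) =
      X k n q x y * mon q a b := by
  simp [mon, List.ofFn_succ]

/-- The product `e_{a₁} ⋯ e_{a_t}` in the quantum exterior algebra. -/
def wedges (q : k) : {t : ℕ} → (Fin t → Fin n) → (Finset (Fin n) →₀ k)
  | 0, _ => Finsupp.single ∅ 1
  | _ + 1, a => wedge q (a 0) (wedges q (Fin.tail a))

lemma wedges_cons (q : k) {t : ℕ} (x : Fin n) (a : Fin t → Fin n) :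
    wedges q (Fin.cons x a : Fin (t + 1) → Fin n) = wedge q x (wedges q a) := rfl

lemma sum_cons {M : Type*} [AddCommMonoid M] {t : ℕ} (f : (Fin (t + 1) → Fin n) → M) :
    ∑ a, f a = ∑ x, ∑ a : Fin t → Fin n, f (Fin.cons x a) := by
  rw [← Fintype.sum_prod_type', ← (Fin.consEquiv fun _ : Fin (t + 1) => Fin n).sum_comp]
  rfl

lemma comul_mon {q : k} {Δ : A k n q →ₐ[k] A k n q ⊗[k] A k n q} (hΔ : IsComul k n q Δ)
    {t : ℕ} (a b : Fin t → Fin n) :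
    Δ (mon q a b) = ∑ d : Fin t → Fin n, mon q a d ⊗ₜ[k] mon q d b := by
  induction t with
  | zero => simp [mon_zero, Algebra.TensorProduct.one_def]
  | succ t ih =>
    rw [← Fin.cons_self_tail a, ← Fin.cons_self_tail b, mon_cons, map_mul, hΔ, ih, sum_cons,
      Finset.sum_mul_sum]
    simp only [mon_cons, Algebra.TensorProduct.tmul_mul_tmul]

variable {q : k} {Δ : A k n q →ₐ[k] A k n q ⊗[k] A k n q} {ε : A k n q →ₐ[k] k}
  {r : A k n q →ₗ[k] A k n q →ₗ[k] k}

/-- The action on `e_{b₁} ⋯ e_{b_t}` of the functional `r(x, ·)` through the coaction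
`e_b ↦ Σ_a e_a ⊗ X_{ab}`. -/
def coact (r : A k n q →ₗ[k] A k n q →ₗ[k] k) (x : A k n q) {t : ℕ} (b : Fin t → Fin n) :
    Finset (Fin n) →₀ k :=
  ∑ a : Fin t → Fin n, r x (mon q a b) • wedges q a

lemma r_mul_right (hΔ : IsComul k n q Δ) (hr : IsRForm k n q Δ ε r) (i j : Fin n)
    (b c : A k n q) :
    r (X k n q i j) (b * c) = ∑ l, r (X k n q i l) c * r (X k n q l j) b := by
  rw [hr.2.2.1, hΔ, map_sum]
  simp [biform]

lemma r_mul_left (hΔ : IsComul k n q Δ) (hr : IsRForm k n q Δ ε r) (x y : A k n q)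
    {t : ℕ} (a b : Fin t → Fin n) :
    r (x * y) (mon q a b) = ∑ d : Fin t → Fin n, r x (mon q a d) * r y (mon q d b) := by
  rw [hr.2.1, comul_mon hΔ, map_sum]
  simp [biform]

/-- The values of `r` on generators, as a diagonal part plus a strictly triangular part; the two
match the two terms of `act_wedge`. -/
lemma r_gen (hr : IsRForm k n q Δ ε r) (i j a b : Fin n) :
    r (X k n q i j) (X k n q a b) =
      (if i = j ∧ a = b then (if i = a then q else 1) else 0) +
        if b = i ∧ a = j ∧ j < i then q - q⁻¹ else 0 := by
  rw [hr.2.2.2.2]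
  by_cases h1 : i = j
  · subst h1
    by_cases h2 : a = b
    · subst h2; simp
    · simp [h2]
  · simp only [h1, false_and, if_false, zero_add]
    congr 1
    apply propext
    tauto

/-- The functionals `r(X_{ij}, ·)` act on the quantum exterior algebra by the operators `act`. -/
lemma coact_gen (hq : q ≠ 0) (hΔ : IsComul k n q Δ) (hε : IsCounit k n q ε)
    (hr : IsRForm k n q Δ ε r) {t : ℕ} (i j : Fin n) (b : Fin t → Fin n) :
    coact r (X k n q i j) b = act q i j (wedges q b) := by
  induction t generalizing i j with
  | zero =>
    simp only [coact, mon_zero, (hr.2.2.2.1 _).1, hε i j, wedges, Finset.univ_unique,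
      Finset.sum_singleton]
    rcases lt_trichotomy i j with h | rfl | h
    · simp [h.ne, act_of_gt q h]
    · rw [act_single_self]; simp
    · rw [act_single_of_lt q h]; simp [h.ne']
  | succ t ih =>
    obtain ⟨y, b, rfl⟩ : ∃ y b', b = (Fin.cons y b' : Fin (t + 1) → Fin n) :=
      ⟨_, _, (Fin.cons_self_tail b).symm⟩
    have key : coact r (X k n q i j) (Fin.cons y b : Fin (t + 1) → Fin n) =
        ∑ l, ∑ x, r (X k n q l j) (X k n q x y) • wedge q x (coact r (X k n q i l) b) := by
      simp only [coact, sum_cons, mon_cons, r_mul_right hΔ hr, wedges_cons, map_sum, map_smul,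
        Finset.smul_sum, Finset.sum_smul, smul_smul]
      rw [Finset.sum_congr rfl fun a _ => Finset.sum_comm, Finset.sum_comm]
      refine Finset.sum_congr rfl fun l _ => Finset.sum_congr rfl fun x _ =>
        Finset.sum_congr rfl fun a _ => by rw [mul_comm]
    rw [key, wedges_cons, act_wedge hq]
    simp only [ih, r_gen hr, add_smul, Finset.sum_add_distrib]
    congr 1
    · rw [Finset.sum_eq_single j, Finset.sum_eq_single y]
      · simp
      · intro x _ hx; simp [hx]
      · simp
      · intro l _ hl; simp [hl]
      · simp
    · rw [Finset.sum_eq_single y, Finset.sum_eq_single j]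
      · by_cases h : j < y <;> simp [h]
      · intro x _ hx; simp [hx]
      · simp
      · intro l _ hl; simp [hl.symm]
      · simp

/-- By condition (ii), multiplying `x` on the left by `X_{ij}` composes its action with `act q i j`. -/
lemma coact_gen_mul (hq : q ≠ 0) (hΔ : IsComul k n q Δ) (hε : IsCounit k n q ε)
    (hr : IsRForm k n q Δ ε r) {t : ℕ} (i j : Fin n) (x : A k n q) (b : Fin t → Fin n) :
    coact r (X k n q i j * x) b = act q i j (coact r x b) := by
  have h : coact r (X k n q i j * x) b =
      ∑ d : Fin t → Fin n, r x (mon q d b) • coact r (X k n q i j) d := by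
    simp only [coact, r_mul_left hΔ hr, Finset.sum_smul, Finset.smul_sum, smul_smul]
    rw [Finset.sum_comm]
    refine Finset.sum_congr rfl fun _ _ => Finset.sum_congr rfl fun _ _ => by rw [mul_comm]
  rw [h]
  simp only [coact_gen hq hΔ hε hr]
  simp only [coact, map_sum, map_smul]

/-- The composite of the operators `act` at `(a₁,b₁), …, (a_s,b_s)`. -/
def acts (q : k) : {s : ℕ} → (Fin s → Fin n) → (Fin s → Fin n) →
    (Finset (Fin n) →₀ k) → (Finset (Fin n) →₀ k)
  | 0, _, _, v => v
  | _ + 1, a, b, v => act q (a 0) (b 0) (acts q (Fin.tail a) (Fin.tail b) v)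

lemma coact_mon (hq : q ≠ 0) (hΔ : IsComul k n q Δ) (hε : IsCounit k n q ε)
    (hr : IsRForm k n q Δ ε r) {s t : ℕ} (c d : Fin s → Fin n) (b : Fin t → Fin n) :
    coact r (mon q c d) b = acts q c d (wedges q b) := by
  induction s with
  | zero =>
    simp only [mon_zero, acts, coact, (hr.2.2.2.1 _).2]
    induction t with
    | zero => simp [mon_zero, wedges]
    | succ t ih =>
      obtain ⟨y, b, rfl⟩ : ∃ y b', b = (Fin.cons y b' : Fin (t + 1) → Fin n) :=
        ⟨_, _, (Fin.cons_self_tail b).symm⟩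
      simp only [sum_cons, mon_cons, map_mul, hε _ _, wedges_cons]
      rw [Finset.sum_eq_single y]
      · simp only [if_true, one_mul, ← map_smul, ← map_sum, ih]
      · intro x _ hx; simp [hx]
      · simp
  | succ s ih =>
    obtain ⟨x, c, rfl⟩ : ∃ y b', c = (Fin.cons y b' : Fin (s + 1) → Fin n) :=
      ⟨_, _, (Fin.cons_self_tail c).symm⟩
    obtain ⟨y, d, rfl⟩ : ∃ y b', d = (Fin.cons y b' : Fin (s + 1) → Fin n) :=
      ⟨_, _, (Fin.cons_self_tail d).symm⟩
    rw [mon_cons, coact_gen_mul hq hΔ hε hr, ih]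
    rfl

/-- The number of inversions of a word, as an integer. -/
def inv {t : ℕ} {α : Type*} [LinearOrder α] (a : Fin t → α) : ℤ :=
  ∑ p, ∑ p', if p < p' ∧ a p' < a p then 1 else 0

lemma inv_cons {t : ℕ} (x : Fin n) (a : Fin t → Fin n) :
    inv (Fin.cons x a : Fin (t + 1) → Fin n) = (∑ p, if a p < x then 1 else 0) + inv a := by
  simp only [inv, Fin.sum_univ_succ, Fin.cons_zero, Fin.cons_succ, Fin.succ_lt_succ_iff,
    Fin.succ_pos, Fin.not_lt_zero, true_and, false_and, if_false, zero_add]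

lemma inversions_eq {t : ℕ} (σ : Equiv.Perm (Fin t)) : (inversions σ : ℤ) = inv σ := by
  rw [inversions, inv, ← Finset.sum_product', Finset.card_filter]
  push_cast
  rfl

lemma wedges_of_injective (hq : q ≠ 0) {t : ℕ} (a : Fin t → Fin n) (ha : a.Injective) :
    wedges q a = Finsupp.single (Finset.univ.image a) ((-q) ^ inv a) := by
  induction t with
  | zero => simp [wedges, inv]
  | succ t ih =>
    obtain ⟨x, a, rfl⟩ : ∃ y b', a = (Fin.cons y b' : Fin (t + 1) → Fin n) :=
      ⟨_, _, (Fin.cons_self_tail a).symm⟩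
    rw [Fin.cons_injective_iff] at ha
    have hx : x ∉ Finset.univ.image a := by simpa using ha.1
    have hi : insert x (Finset.univ.image a) =
        Finset.univ.image (Fin.cons x a : Fin (t + 1) → Fin n) := by
      ext y; simp [Fin.exists_fin_succ, eq_comm]
    rw [wedges_cons, ih a ha.2, wedge_single, if_neg hx, ← zpow_add₀ (neg_ne_zero.mpr hq), inv_cons,
      hi, below, Finset.sum_image (fun _ _ _ _ h => ha.2 h), add_comm (inv a)]

lemma wedges_of_not_injective (hq : q ≠ 0) {t : ℕ} (a : Fin t → Fin n) (ha : ¬ a.Injective) :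
    wedges q a = 0 := by
  induction t with
  | zero => exact absurd (Function.injective_of_subsingleton a) ha
  | succ t ih =>
    obtain ⟨x, a, rfl⟩ : ∃ y b', a = (Fin.cons y b' : Fin (t + 1) → Fin n) :=
      ⟨_, _, (Fin.cons_self_tail a).symm⟩
    rw [wedges_cons]
    by_cases h : a.Injective
    · rw [Fin.cons_injective_iff, not_and_or] at ha
      have hx : x ∈ Finset.univ.image a := by simpa [h] using ha
      rw [wedges_of_injective hq a h, wedge_single, if_pos hx]
    · rw [ih a h, map_zero]

lemma qMinor_eq {t : ℕ} {M N : Finset (Fin n)} (hM : M.card = t) (hN : N.card = t) :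
    qMinor k n q M N = ∑ σ : Equiv.Perm (Fin t),
      (-q) ^ inv σ • mon q (fun l => M.orderEmbOfFin hM (σ l)) (N.orderEmbOfFin hN) := by
  subst hM
  rw [qMinor, dif_pos hN.symm]
  refine Finset.sum_congr rfl fun σ _ => ?_
  rw [← zpow_natCast, inversions_eq]
  rfl

lemma inv_comp {t : ℕ} {m : Fin t → Fin n} (hm : StrictMono m) (σ : Equiv.Perm (Fin t)) :
    inv (fun l => m (σ l)) = inv σ := by
  simp only [inv, hm.lt_iff_lt]

/-- The value `r(x, [M|N])` is the coefficient of `e_M` in the action of `x` on `e_N`. -/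
lemma r_qMinor (hq : q ≠ 0) {t : ℕ} {M N : Finset (Fin n)} (hM : M.card = t) (hN : N.card = t)
    (r : A k n q →ₗ[k] A k n q →ₗ[k] k) (x : A k n q) :
    r x (qMinor k n q M N) = coact r x (N.orderEmbOfFin hN) M := by
  rw [qMinor_eq hM hN, map_sum, coact, Finsupp.finsetSum_apply]
  have hinj : ∀ σ : Equiv.Perm (Fin t),
      Function.Injective fun l => M.orderEmbOfFin hM (σ l) := fun σ =>
    (M.orderEmbOfFin hM).injective.comp σ.injective
  refine Finset.sum_of_injOn (fun (σ : Equiv.Perm (Fin t)) l => M.orderEmbOfFin hM (σ l))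
    ?_ (by simp) ?_ ?_
  · intro σ _ τ _ h
    ext l
    simpa using congrArg Fin.val (show σ l = τ l by simpa using congrFun h l)
  · intro a _ ha
    rw [Finsupp.smul_apply, smul_eq_mul]
    by_cases h : a.Injective
    · rw [wedges_of_injective hq a h, Finsupp.single_apply, if_neg, mul_zero]
      rintro rfl
      apply ha
      have hmem : ∀ l, a l ∈ Finset.univ.image a := fun l => by simp
      choose σ hσ using fun l =>
        (Set.ext_iff.1 (Finset.range_orderEmbOfFin (Finset.univ.image a) hM) (a l)).2 (hmem l)
      have hσi : σ.Injective := fun l l' e => h (by rw [← hσ l, ← hσ l', e])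
      exact ⟨Equiv.ofBijective σ (Finite.injective_iff_bijective.1 hσi), by simp,
        funext hσ⟩
    · rw [wedges_of_not_injective hq a h]; simp
  · intro σ _
    have him : Finset.univ.image (fun l => M.orderEmbOfFin hM (σ l)) = M := by
      apply Finset.eq_of_subset_of_card_le
      · intro y; simp only [Finset.mem_image]; rintro ⟨l, _, rfl⟩; exact Finset.orderEmbOfFin_mem _ _ _
      · rw [Finset.card_image_of_injective _ (hinj σ)]; simp [hM]
    rw [wedges_of_injective hq _ (hinj σ), inv_comp (M.orderEmbOfFin hM).strictMono,
      Finsupp.smul_apply, him, Finsupp.single_eq_same, map_smul, smul_eq_mul, smul_eq_mul, mul_comm]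

lemma inv_of_strictMono {t : ℕ} {a : Fin t → Fin n} (ha : StrictMono a) : inv a = 0 := by
  refine Finset.sum_eq_zero fun p _ => Finset.sum_eq_zero fun p' _ => if_neg ?_
  rintro ⟨h, h'⟩
  exact (ha h).not_gt h'

lemma wedges_orderEmb (hq : q ≠ 0) {t : ℕ} {N : Finset (Fin n)} (hN : N.card = t) :
    wedges q (N.orderEmbOfFin hN) = Finsupp.single N 1 := by
  rw [wedges_of_injective hq _ (N.orderEmbOfFin hN).injective,
    inv_of_strictMono (N.orderEmbOfFin hN).strictMono, zpow_zero]
  congr 1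
  exact Finset.image_orderEmbOfFin_univ N hN

/-- The pairing of two quantum minors as a sum over permutations. -/
lemma r_qMinor_qMinor (hq : q ≠ 0) (hΔ : IsComul k n q Δ) (hε : IsCounit k n q ε)
    (hr : IsRForm k n q Δ ε r) {t : ℕ} {I J : Finset (Fin n)} (hI : I.card = t)
    (hJ : J.card = t) :
    r (qMinor k n q I J) (qMinor k n q J I) = ∑ σ : Equiv.Perm (Fin t), (-q) ^ inv σ *
      acts q (fun l => I.orderEmbOfFin hI (σ l)) (J.orderEmbOfFin hJ) (Finsupp.single I 1) J := by
  rw [qMinor_eq hI hJ, map_sum, LinearMap.sum_apply]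
  refine Finset.sum_congr rfl fun σ _ => ?_
  rw [map_smul, LinearMap.smul_apply, r_qMinor hq hJ hI, coact_mon hq hΔ hε hr,
    wedges_orderEmb hq, smul_eq_mul]

/-! ### Composites of the operators `act` -/

/-- Evaluation of a chain of operators `act` moving each `a_p` to `b_p`, over a set `B` of
spectators. The power of `-q` records, for each step, the elements passed over: spectators, the
`a`'s not yet moved, and the `b`'s already reached. -/
lemma acts_single (hq : q ≠ 0) {t : ℕ} (a b : Fin t → Fin n) (B : Finset (Fin n))
    (ha : a.Injective) (hb : b.Injective) (hab : ∀ p p', a p ≠ b p')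
    (haB : ∀ p, a p ∉ B) (hbB : ∀ p, b p ∉ B) :
    acts q a b (Finsupp.single (B ∪ Finset.univ.image a) 1) =
      if ∀ p, b p < a p then
        Finsupp.single (B ∪ Finset.univ.image b) ((q - q⁻¹) ^ t * (-q) ^ (-(
          (∑ p, between B (b p) (a p)) +
          ∑ p, ∑ p', if p < p' then
            (if b p < b p' ∧ b p' < a p then 1 else 0) +
              (if b p' < a p ∧ a p < a p' then 1 else 0) else 0)))
      else 0 := by
  induction t generalizing B with
  | zero => simp [acts]
  | succ t ih =>
    obtain ⟨x, a, rfl⟩ : ∃ y b', a = (Fin.cons y b' : Fin (t + 1) → Fin n) :=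
      ⟨_, _, (Fin.cons_self_tail a).symm⟩
    obtain ⟨y, b, rfl⟩ : ∃ y b', b = (Fin.cons y b' : Fin (t + 1) → Fin n) :=
      ⟨_, _, (Fin.cons_self_tail b).symm⟩
    rw [Fin.cons_injective_iff] at ha hb
    simp only [Fin.forall_fin_succ, Fin.cons_zero, Fin.cons_succ] at hab haB hbB ⊢
    have hx : ∀ p, a p ≠ x := fun p h => ha.1 ⟨p, h⟩
    have hy : ∀ p, b p ≠ y := fun p h => hb.1 ⟨p, h⟩
    have hi : ∀ (z : Fin n) (c : Fin t → Fin n),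
        Finset.univ.image (Fin.cons z c : Fin (t + 1) → Fin n) =
          insert z (Finset.univ.image c) := by
      intro z c; ext w; simp [Fin.exists_fin_succ, eq_comm]
    have h1 : acts q (Fin.cons x a : Fin (t + 1) → Fin n) (Fin.cons y b : Fin (t + 1) → Fin n)
        (Finsupp.single (B ∪ Finset.univ.image (Fin.cons x a : Fin (t + 1) → Fin n)) 1) =
        act q x y (acts q a b (Finsupp.single (insert x B ∪ Finset.univ.image a) 1)) := by
      rw [hi, Finset.union_insert, Finset.insert_union]; rfl
    rw [h1, ih a b (insert x B) ha.2 hb.2 (fun p => (hab.2 p).2)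
      (fun p => by simp [hx, haB.2]) (fun p => by simp [(hab.1.2 p).symm, hbB.2])]
    by_cases hp : ∀ p, b p < a p
    · rw [if_pos hp]
      rcases lt_trichotomy x y with hxy | hxy | hxy
      · rw [act_of_gt q hxy, if_neg (by simp [hxy.le]), LinearMap.zero_apply]
      · exact absurd hxy hab.1.1
      · have hxb : x ∉ Finset.univ.image b := by simpa using fun p => (hab.1.2 p).symm
        have hyb : y ∉ Finset.univ.image b := by simpa using hy
        rw [act_single_of_lt q hxy, if_pos (by simp [hbB.1, hy, hab.1.1.symm]), if_pos ⟨hxy, hp⟩]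
        have hset : insert y ((insert x B ∪ Finset.univ.image b).erase x) =
            B ∪ Finset.univ.image (Fin.cons y b : Fin (t + 1) → Fin n) := by
          rw [hi, Finset.insert_union, Finset.erase_insert (by simp [haB.1, hxb]),
            Finset.union_insert]
        have hbt : between (insert x B ∪ Finset.univ.image b) y x =
            between B y x + ∑ p, if y < b p ∧ b p < x then 1 else 0 := by
          rw [Finset.insert_union, between_insert (by simp [haB.1, hxb]), if_neg (by simp),
            zero_add, between, Finset.sum_union, Finset.sum_image (fun _ _ _ _ h => hb.2 h)]
          · rfl
          · rw [Finset.disjoint_right]; simpa using hbB.2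
        rw [hset, hbt]
        congr 1
        simp only [Fin.sum_univ_succ, Fin.cons_zero, Fin.cons_succ, between_insert haB.1,
          Finset.sum_add_distrib, Fin.succ_lt_succ_iff, if_false, Fin.succ_pos,
          Fin.not_lt_zero, if_true, zero_add]
        rw [show ∀ u v w z : k, u * v * (w * z) = u * w * (v * z) from fun _ _ _ _ => by ring,
          ← pow_succ, ← zpow_add₀ (neg_ne_zero.mpr hq)]
        congr 2
        ring
    · rw [if_neg hp, map_zero, if_neg (fun h => hp h.2)]

/-! ### The sum over rook placements -/

lemma sum_card_above {R : Type*} [CommSemiring R] (v : R) (S : Finset (Fin n)) :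
    ∑ a ∈ S, v ^ (S.filter (a < ·)).card = ∑ s ∈ Finset.range S.card, v ^ s := by
  induction S using Finset.induction_on_max with
  | empty => simp
  | insert a S ha ih =>
    have haS : a ∉ S := fun h => lt_irrefl _ (ha a h)
    rw [Finset.sum_insert haS, Finset.card_insert_of_notMem haS, geom_sum_succ, ← ih,
      Finset.mul_sum, add_comm]
    congr 1
    · refine Finset.sum_congr rfl fun x hx => ?_
      rw [Finset.filter_insert, if_pos (ha x hx), Finset.card_insert_of_notMem (by simp [haS]),
        pow_succ']
    · rw [Finset.filter_insert, if_neg (lt_irrefl _), Finset.filter_false_of_mem, Finset.card_empty,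
        pow_zero]
      exact fun x hx => (ha x hx).not_gt

/-- The contribution of one row, at height `x`, to the rook sum: the columns `j c < x` are ranked
by the number of admissible columns to their right. -/
lemma sum_choices {R : Type*} [CommSemiring R] (v : R) {t : ℕ} (j : Fin t → Fin n)
    (hj : j.Injective) (x : Fin n) :
    (∑ c, if j c < x then v ^ (∑ c', if j c < j c' ∧ j c' < x then 1 else 0) else 0) =
      ∑ s ∈ Finset.range (Finset.univ.filter fun c => j c < x).card, v ^ s := by
  have hc := Finset.card_image_of_injective (Finset.univ.filter fun c => j c < x) hj
  rw [← hc, ← sum_card_above, Finset.sum_image (fun _ _ _ _ h => hj h), ← Finset.sum_filter]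
  refine Finset.sum_congr rfl fun c _ => ?_
  rw [← Finset.card_filter, Finset.filter_image, Finset.card_image_of_injective _ hj,
    Finset.filter_filter]
  congr 2
  ext c'
  simp [and_comm]

/-- A weighted rook-placement formula: rows are filled in increasing order, and the number of
columns still admissible for row `l` does not depend on the earlier choices. -/
lemma rook {R : Type*} [CommSemiring R] (v : R) {t : ℕ} (i j : Fin t → Fin n)
    (hi : StrictMono i) (hj : j.Injective) :
    (∑ τ : Equiv.Perm (Fin t), if ∀ p, j (τ p) < i p then
      v ^ (∑ p, ∑ p', if p < p' ∧ j (τ p) < j (τ p') ∧ j (τ p') < i p then 1 else 0) else 0) =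
      ∏ l, ∑ s ∈ Finset.range ((Finset.univ.filter fun c => j c < i l).card - (l : ℕ)), v ^ s := by
  induction t with
  | zero => simp
  | succ t ih =>
    rw [← Equiv.Perm.decomposeFin.symm.sum_comp, Fintype.sum_prod_type, Fin.prod_univ_succ]
    simp only [Fin.val_zero, tsub_zero]
    rw [← sum_choices v j hj (i 0), Finset.sum_mul]
    refine Finset.sum_congr rfl fun c _ => ?_
    by_cases hc : j c < i 0
    swap
    · rw [if_neg hc, zero_mul]
      refine Finset.sum_eq_zero fun τ _ => if_neg fun h => hc ?_
      simpa using h 0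
    rw [if_pos hc]
    set j' : Fin t → Fin n := fun p => j (Equiv.swap 0 c p.succ) with hj'
    have hj'i : j'.Injective := fun p p' h =>
      Fin.succ_injective _ ((Equiv.swap 0 c).injective (hj h))
    have hi' : StrictMono fun p : Fin t => i p.succ := fun p p' h => hi (Fin.succ_lt_succ_iff.2 h)
    have hcard : ∀ l : Fin t, (Finset.univ.filter fun c => j c < i l.succ).card - (l.succ : ℕ) =
        (Finset.univ.filter fun p => j' p < i l.succ).card - (l : ℕ) := by
      intro l
      have : (Finset.univ.filter fun c => j c < i l.succ).card =
          (Finset.univ.filter fun p => j' p < i l.succ).card + 1 := by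
        rw [Finset.card_filter, Finset.card_filter, ← Equiv.sum_comp (Equiv.swap 0 c),
          Fin.sum_univ_succ, Equiv.swap_apply_left, if_pos (hc.trans (hi (Fin.succ_pos l))), add_comm]
      rw [this, Fin.val_succ]
      omega
    simp only [hcard]
    rw [← ih _ j' hi' hj'i, Finset.mul_sum]
    refine Finset.sum_congr rfl fun τ _ => ?_
    have hτ : ∀ p, j (Equiv.Perm.decomposeFin.symm (c, τ) p.succ) = j' (τ p) := by
      intro p; rw [Equiv.Perm.decomposeFin_symm_apply_succ]
    have hτ0 : j (Equiv.Perm.decomposeFin.symm (c, τ) 0) = j c := by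
      rw [Equiv.Perm.decomposeFin_symm_apply_zero]
    have h0 : (∑ c', if j c < j c' ∧ j c' < i 0 then 1 else 0 : ℕ) =
        ∑ p : Fin t, if j c < j' (τ p) ∧ j' (τ p) < i 0 then 1 else 0 := by
      rw [← Equiv.sum_comp (Equiv.Perm.decomposeFin.symm (c, τ)), Fin.sum_univ_succ]
      simp only [hτ, hτ0, lt_irrefl, false_and, if_false, zero_add]
    simp only [Fin.forall_fin_succ, Fin.sum_univ_succ, hτ, hτ0, hc, true_and, h0,
      Fin.succ_lt_succ_iff, Fin.succ_pos, Fin.not_lt_zero, false_and, if_false, zero_add]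
    split_ifs
    · rw [pow_add]
    · rw [mul_zero]

/-- Inversions of `σ` against the powers of `-q` produced by `acts`: in total, `-2` for each pair
of rows whose chosen columns are in the same order and both lie to the left of the lower row. -/
lemma exponent_eq {t : ℕ} (i j : Fin t → Fin n) (hi : StrictMono i) (hj : StrictMono j)
    (σ : Equiv.Perm (Fin t)) (h : ∀ p, j p < i (σ p)) :
    inv σ - (∑ p, ∑ p', if p < p' then
        (if j p < j p' ∧ j p' < i (σ p) then 1 else 0) +
          (if j p' < i (σ p) ∧ i (σ p) < i (σ p') then 1 else 0) else 0 : ℤ) =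
      -2 * (∑ p, ∑ p', if p < p' ∧ j (σ⁻¹ p) < j (σ⁻¹ p') ∧ j (σ⁻¹ p') < i p then 1 else 0 : ℕ) := by
  have hR : ((∑ p, ∑ p', if p < p' ∧ j (σ⁻¹ p) < j (σ⁻¹ p') ∧ j (σ⁻¹ p') < i p
      then 1 else 0 : ℕ) : ℤ) =
      ∑ p, ∑ p', if σ p < σ p' ∧ j p < j p' ∧ j p' < i (σ p) then 1 else 0 := by
    push_cast
    rw [← Equiv.sum_comp σ]
    refine Finset.sum_congr rfl fun p _ => ?_
    rw [← Equiv.sum_comp σ]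
    simp
  rw [hR]
  -- Both double sums have the same symmetrization, so they agree in the torsion-free group `ℤ`.
  rw [inv, ← Finset.sum_sub_distrib, Finset.mul_sum]
  simp only [← Finset.sum_sub_distrib, Finset.mul_sum]
  have sym : ∀ f g : Fin t → Fin t → ℤ, (∀ p p', f p p' + f p' p = g p p' + g p' p) →
      ∑ p, ∑ p', f p p' = ∑ p, ∑ p', g p p' := by
    intro f g hfg
    have e1 : ∑ p, ∑ p', (f p p' + f p' p) = ∑ p, ∑ p', (g p p' + g p' p) := by simp only [hfg]
    simp only [Finset.sum_add_distrib] at e1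
    rw [Finset.sum_comm (f := fun p p' => f p' p), Finset.sum_comm (f := fun p p' => g p' p)] at e1
    linarith
  have main : ∀ p p', p < p' →
      ((if p < p' ∧ σ p' < σ p then 1 else 0) - (if p < p' then
        (if j p < j p' ∧ j p' < i (σ p) then 1 else 0) +
          (if j p' < i (σ p) ∧ i (σ p) < i (σ p') then 1 else 0) else 0) : ℤ) =
      -2 * if σ p < σ p' ∧ j p < j p' ∧ j p' < i (σ p) then 1 else 0 := by
    intro p p' hp
    have hne : σ p ≠ σ p' := fun e => hp.ne (σ.injective e)
    rcases lt_or_gt_of_ne hne with hσ | hσ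
    · by_cases hc : j p' < i (σ p) <;> simp [hp, hj hp, hi hσ, hσ, hσ.not_gt, hc]
    · simp [hp, hj hp, hσ, hσ.not_gt, (h p').trans (hi hσ), (hi hσ).not_gt]
  apply sym
  intro p p'
  have zero : ∀ p p', ¬ p < p' → (if σ p < σ p' ∧ j p < j p' ∧ j p' < i (σ p) then (1 : ℤ) else 0) = 0 :=
    fun p p' hp => if_neg fun e => hp (hj.lt_iff_lt.1 e.2.1)
  rcases lt_trichotomy p p' with hp | rfl | hp
  · rw [main p p' hp, zero p' p hp.not_gt]; simp [hp.not_gt]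
  · simp
  · rw [main p' p hp, zero p p' hp.not_gt]; simp [hp.not_gt]

/-! ### Reindexing by positions -/

lemma sum_orderEmb {M : Type*} [AddCommMonoid M] {t : ℕ} {I : Finset (Fin n)} (hI : I.card = t)
    (f : Fin n → M) : ∑ x ∈ I, f x = ∑ l, f (I.orderEmbOfFin hI l) := by
  conv_lhs => rw [← Finset.image_orderEmbOfFin_univ I hI]
  exact Finset.sum_image fun _ _ _ _ h => (I.orderEmbOfFin hI).injective h

lemma ell_eq {t : ℕ} {I J : Finset (Fin n)} (hI : I.card = t) (hJ : J.card = t) :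
    ell n J I = ∑ l, (Finset.univ.filter fun c =>
      I.orderEmbOfFin hI l < J.orderEmbOfFin hJ c).card := by
  rw [ell, Finset.card_filter, Finset.sum_product_right, sum_orderEmb hI]
  refine Finset.sum_congr rfl fun l _ => ?_
  rw [sum_orderEmb hJ, Finset.card_filter]

lemma setLE_orderEmb {t : ℕ} {I J : Finset (Fin n)} (hI : I.card = t) (hJ : J.card = t)
    (h : setLE n J I) (l : Fin t) : J.orderEmbOfFin hJ l ≤ I.orderEmbOfFin hI l := by
  subst hJ
  exact h.2 hI.symm l

lemma card_filter_orderEmb {t : ℕ} {J : Finset (Fin n)} (hJ : J.card = t) (p : Fin n → Prop)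
    [DecidablePred p] :
    (J.filter p).card = (Finset.univ.filter fun c => p (J.orderEmbOfFin hJ c)).card := by
  rw [Finset.card_filter, Finset.card_filter, sum_orderEmb hJ]

lemma negqInt_eq (hq : q ≠ 0) (d : ℕ) :
    negqInt k q d = (-q) ^ ((d : ℤ) - 1) * ∑ s ∈ Finset.range d, ((-q) ^ (-2 : ℤ)) ^ s := by
  rw [negqInt, Finset.mul_sum]
  refine Finset.sum_congr rfl fun s _ => ?_
  rw [← zpow_natCast, ← zpow_mul, ← zpow_add₀ (neg_ne_zero.mpr hq), neg_mul, sub_eq_add_neg _ (2 * _)]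

lemma prod_zpow_sum {x : k} (hx : x ≠ 0) {ι : Type*} {s : Finset ι} (f : ι → ℤ) :
    ∏ l ∈ s, x ^ f l = x ^ ∑ l ∈ s, f l := by
  induction s using Finset.induction_on with
  | empty => simp
  | insert a s ha ih => rw [Finset.prod_insert ha, Finset.sum_insert ha, zpow_add₀ hx, ih]

end

end QMinorPairing

open QMinorPairing

/-- Lemma 4.5: `r([I|J],[J|I]) = q̂^{|I|} (−q)^{ℓ(J;I)−ℓ(I;I)} ξ_q(I;J)` for `I > J` disjoint. -/
theorem stmt13 (k : Type*) [Field k] (n : ℕ) (hn : 0 < n) (q : k) (hq : q ≠ 0)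
    (Δ : A k n q →ₐ[k] A k n q ⊗[k] A k n q) (ε : A k n q →ₐ[k] k)
    (hΔ : IsComul k n q Δ) (hε : IsCounit k n q ε)
    (r : A k n q →ₗ[k] A k n q →ₗ[k] k) (hr : IsRForm k n q Δ ε r)
    (I J : Finset (Fin n)) (hIJ : I.card = J.card) (hdisj : I ∩ J = ∅)
    (hge : setLE n J I) (hne : I ≠ J) :
    r (qMinor k n q I J) (qMinor k n q J I) =
      (q - q⁻¹) ^ I.card * (-q) ^ ((ell n J I : ℤ) - (ell n I I : ℤ)) * xiq k n q I J := by
  set t := I.card with ht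
  have hI : I.card = t := rfl
  have hJ : J.card = t := hIJ.symm
  set i := I.orderEmbOfFin hI with hi_def
  set j := J.orderEmbOfFin hJ with hj_def
  have hq' : -q ≠ 0 := neg_ne_zero.mpr hq
  have hdis : ∀ p p', i p ≠ j p' := fun p p' h => by
    have h1 : i p ∈ I ∩ J := Finset.mem_inter.2
      ⟨Finset.orderEmbOfFin_mem _ _ _, h ▸ Finset.orderEmbOfFin_mem _ _ _⟩
    simp [hdisj] at h1
  -- The left-hand side as a weighted sum over rook placements.
  have hL : r (qMinor k n q I J) (qMinor k n q J I) = (q - q⁻¹) ^ t *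
      ∏ l, ∑ s ∈ Finset.range ((Finset.univ.filter fun c => j c < i l).card - (l : ℕ)),
        ((-q) ^ (-2 : ℤ)) ^ s := by
    rw [r_qMinor_qMinor hq hΔ hε hr hI hJ, ← rook _ i j i.strictMono j.injective, Finset.mul_sum,
      ← Equiv.sum_comp (Equiv.inv (Equiv.Perm (Fin t)))]
    refine Finset.sum_congr rfl fun σ _ => ?_
    rw [Equiv.inv_apply]
    obtain ⟨τ, rfl⟩ : ∃ τ, σ = τ⁻¹ := ⟨σ⁻¹, by simp⟩
    rw [inv_inv]
    have hiI : Finset.univ.image (fun l => i (τ l)) = I := by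
      rw [← Finset.image_orderEmbOfFin_univ I hI]
      ext x
      simp only [Finset.mem_image, Finset.mem_univ, true_and]
      exact (τ.surjective.exists (p := fun a => i a = x)).symm
    have hjJ : Finset.univ.image j = J := Finset.image_orderEmbOfFin_univ J hJ
    have hact := acts_single hq (fun l => i (τ l)) j ∅ (i.injective.comp τ.injective) j.injective
      (fun p p' => hdis _ _) (by simp) (by simp)
    rw [hiI, hjJ, Finset.empty_union, Finset.empty_union] at hact
    rw [hact]
    have hiff : (∀ p, j (τ⁻¹ p) < i p) ↔ ∀ p, j p < i (τ p) := by
      rw [τ.surjective.forall]; simp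
    by_cases h : ∀ p, j p < i (τ p)
    · rw [if_pos h, if_pos (hiff.2 h), Finsupp.single_eq_same, mul_left_comm, ← zpow_add₀ hq',
        ← zpow_natCast ((-q) ^ (-2 : ℤ)), ← zpow_mul, ← exponent_eq i j i.strictMono j.strictMono τ h]
      simp [between, sub_eq_add_neg]
    · rw [if_neg h, if_neg (mt hiff.1 h)]
      simp
  have hd : ∀ l, (J.filter fun x => x ≤ i l).card = (Finset.univ.filter fun c => j c < i l).card := by
    intro l
    rw [card_filter_orderEmb hJ]
    congr 1
    ext c
    simpa using (lt_iff_le_and_ne.trans (and_iff_left (hdis l c).symm)).symm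
  -- `J ≤ I` makes every `d_l` positive, so the natural-number subtraction is exact.
  have hpos : ∀ l : Fin t, (l : ℕ) + 1 ≤ (Finset.univ.filter fun c => j c < i l).card := by
    intro l
    rw [← Fin.card_Iic]
    refine Finset.card_le_card fun c hc => ?_
    rw [Finset.mem_Iic] at hc
    simp only [Finset.mem_filter, Finset.mem_univ, true_and]
    exact lt_of_le_of_ne ((j.monotone hc).trans (setLE_orderEmb hI hJ hge l)) (hdis l c).symm
  have hexp : (ell n J I : ℤ) - ell n I I + ∑ l : Fin t,
      ((((Finset.univ.filter fun c => j c < i l).card - (l : ℕ) : ℕ) : ℤ) - 1) = 0 := by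
    rw [ell_eq hI hJ, ell_eq hI hI]
    push_cast
    rw [← Finset.sum_sub_distrib, ← Finset.sum_add_distrib]
    refine Finset.sum_eq_zero fun l _ => ?_
    have h1 : (Finset.univ.filter fun c => i l < i c).card = t - 1 - l := by
      rw [← Fin.card_Ioi]
      congr 1
      ext c
      simp
    have h2 : (Finset.univ.filter fun c => j c < i l).card +
        (Finset.univ.filter fun c => i l < j c).card = t := by
      have h3 := Finset.card_filter_add_card_filter_not (s := Finset.univ) (fun c => j c < i l)
      rw [Finset.card_univ, Fintype.card_fin] at h3
      refine Eq.trans ?_ h3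
      congr 2
      ext c
      simpa using lt_iff_le_and_ne.trans (and_iff_left (hdis l c))
    have h4 := hpos l
    have h5 := l.2
    simp only [← hi_def, ← hj_def]
    omega
  have hxi : xiq k n q I J = (-q) ^ (∑ l : Fin t,
      ((((Finset.univ.filter fun c => j c < i l).card - (l : ℕ) : ℕ) : ℤ) - 1)) *
      ∏ l, ∑ s ∈ Finset.range ((Finset.univ.filter fun c => j c < i l).card - (l : ℕ)),
        ((-q) ^ (-2 : ℤ)) ^ s := by
    rw [xiq, dif_pos hIJ, ← prod_zpow_sum hq', ← Finset.prod_mul_distrib]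
    refine Finset.prod_congr rfl fun l _ => ?_
    rw [← negqInt_eq hq, ← hd l]
    rfl
  rw [hL, hxi, mul_assoc, ← mul_assoc ((-q) ^ _) ((-q) ^ _), ← zpow_add₀ hq', hexp, zpow_zero,
    one_mul]

end
end
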